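/- arXiv:1302.2116 — 4 statements merged into one kernel-verified Lean document; each statement's English description precedes it below -/
import Mathlib

section
/- Replica trick (one-dimensional case): if 𝛍 is an exchangeable random measure on A^ℕ for a compact metric space A, then there exist a standard Borel space Ā = A^ℕ and an exchangeable sequence (Y_n, X_n)_{n∈ℕ} of (Ā × A)-valued random variables such that 𝛍(·) has the same law (as a random measure) as the conditional distribution P((X_n)_n ∈ · | (Y_n)_n). -/
open MeasureTheory ProbabilityTheory

/-- A permutation of `ℕ` is finitely supported if it fixes all but finitely many elements. -/
def FinitelySupported (σ : Equiv.Perm ℕ) : Prop := {n : ℕ | σ n ≠ n}.Finite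

open Filter Topology in

theorem slln_aux {E : Type*} [MeasurableSpace E] (S : Set E) (hS : MeasurableSet S) :
    ∃ f : (ℕ → E) → ENNReal, Measurable f ∧ ∀ (μ : Measure E) [IsProbabilityMeasure μ],
      ∀ᵐ z ∂(Measure.infinitePi (fun _ : ℕ => μ)), f z = μ S := by
  have hmi : Measurable (S.indicator (fun _ => (1 : ℝ))) := measurable_const.indicator hS
  refine ⟨fun z => limsup (fun n : ℕ => ENNReal.ofReal
    ((∑ i ∈ Finset.range n, S.indicator (fun _ => (1 : ℝ)) (z i)) / n)) atTop, ?_, ?_⟩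
  · refine Measurable.limsup fun n => ?_
    refine ENNReal.measurable_ofReal.comp (Measurable.div_const ?_ _)
    exact Finset.measurable_sum _ fun i _ => hmi.comp (measurable_pi_apply i)
  · intro μ _
    have hmp (i : ℕ) := measurePreserving_eval_infinitePi (fun _ : ℕ => μ) i
    have h := strong_law_ae_real (μ := Measure.infinitePi (fun _ : ℕ => μ))
      (fun i z => S.indicator (fun _ => (1 : ℝ)) (z i)) ?_ ?_ ?_
    · filter_upwards [h] with z hz
      have h2 := (ENNReal.continuous_ofReal.tendsto _).comp hz
      refine h2.limsup_eq.trans ?_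
      have : ∫ z, S.indicator (fun _ => (1 : ℝ)) (z 0) ∂(Measure.infinitePi (fun _ : ℕ => μ))
          = ∫ x, S.indicator (fun _ => (1 : ℝ)) x ∂μ := by
        conv_rhs => rw [← (hmp 0).map_eq]
        rw [integral_map (hmp 0).measurable.aemeasurable hmi.aestronglyMeasurable]
      rw [this, integral_indicator hS]
      simp
    · have : Integrable (S.indicator (fun _ => (1 : ℝ))) μ :=
        (integrable_const _).indicator hS
      exact (hmp 0).integrable_comp_of_integrable this
    · intro i j hij
      exact (iIndepFun_infinitePi (P := fun _ : ℕ => μ) (X := fun _ => S.indicator (fun _ => (1 : ℝ)))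
        (fun _ => hmi)).indepFun hij
    · intro i
      refine IdentDistrib.comp (u := S.indicator (fun _ => (1 : ℝ))) (f := fun z : ℕ → E => z i) (g := fun z : ℕ → E => z 0) ⟨(measurable_pi_apply i).aemeasurable, (measurable_pi_apply 0).aemeasurable, ?_⟩ hmi
      exact (hmp i).map_eq.trans (hmp 0).map_eq.symm

theorem ae_measure_eq_of_forall {R E : Type*} [MeasurableSpace R] [MeasurableSpace E]
    [MeasurableSpace.CountablyGenerated E] (ρ : Measure R) (μ ν : R → Measure E)
    [∀ r, IsProbabilityMeasure (μ r)] [∀ r, IsProbabilityMeasure (ν r)]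
    (h : ∀ S, MeasurableSet S → ∀ᵐ r ∂ρ, μ r S = ν r S) : ∀ᵐ r ∂ρ, μ r = ν r := by
  have hg : generateSetAlgebra (MeasurableSpace.countableGeneratingSet E) ⊆ {s | MeasurableSet s} := by
    intro s hs
    have := MeasurableSpace.measurableSet_generateFrom hs
    rwa [generateFrom_generateSetAlgebra_eq,
      MeasurableSpace.generateFrom_countableGeneratingSet] at this
  have := (ae_ball_iff (μ := ρ) (countable_generateSetAlgebra
    (MeasurableSpace.countable_countableGeneratingSet (α := E)))
    (p := fun r s _ => μ r s = ν r s)).2 (fun s hs => h s (hg hs))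
  filter_upwards [this] with r hr
  refine ext_of_generate_finite (generateSetAlgebra (MeasurableSpace.countableGeneratingSet E))
    ?_ ?_ hr (by simp)
  · rw [generateFrom_generateSetAlgebra_eq,
      MeasurableSpace.generateFrom_countableGeneratingSet]
  · exact isSetAlgebra_generateSetAlgebra.isSetRing.isSetSemiring.isPiSystem

theorem law_aux {Ω W E : Type*} [MeasurableSpace Ω] [MeasurableSpace W] [MeasurableSpace E]
    [MeasurableSpace.CountablyGenerated E]
    (P : Measure Ω) [IsProbabilityMeasure P] (η : Kernel Ω W) [IsMarkovKernel η]
    (κ : Kernel Ω E) [IsMarkovKernel κ] (C : Kernel W E) [IsMarkovKernel C]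
    (hC : (P.bind η) ⊗ₘ C = P.bind (fun ω => (η ω).prod (κ ω)))
    (hf : ∀ S, MeasurableSet S → ∃ f : W → ENNReal, Measurable f ∧
      ∀ ω, ∀ᵐ w ∂(η ω), f w = κ ω S) :
    P.map κ = (P.bind η).map C := by
  have hmp : Measurable (fun ω => (η ω).prod (κ ω)) := by
    have := (η ×ₖ κ).measurable
    have e : ⇑(η ×ₖ κ) = fun ω => (η ω).prod (κ ω) := funext fun ω => Kernel.prod_apply _ _ ω
    rwa [e] at this
  have hsnd : (P ⊗ₘ η).snd = P.bind η := Measure.snd_compProd _ _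
  have : IsProbabilityMeasure (P.bind η) := by rw [← hsnd]; infer_instance
  have key : ∀ᵐ p ∂(P ⊗ₘ η), κ p.1 = C p.2 := by
    apply ae_measure_eq_of_forall
    intro S hS
    obtain ⟨f, hfm, hf⟩ := hf S hS
    have h1 : (fun w => C w S) =ᵐ[P.bind η] f := by
      refine ae_eq_of_forall_setLIntegral_eq_of_sigmaFinite (C.measurable_coe hS) hfm ?_
      intro B hB _
      have e1 := congrArg (fun m => m (B ×ˢ S)) hC
      rw [Measure.compProd_apply_prod hB hS, Measure.bind_apply (hB.prod hS) hmp.aemeasurable] at e1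
      rw [e1, ← lintegral_indicator hB, Measure.lintegral_bind η.aemeasurable
        (hfm.indicator hB).aemeasurable]
      refine lintegral_congr fun ω => ?_
      rw [Measure.prod_prod, lintegral_indicator hB,
        lintegral_congr_ae (ae_restrict_of_ae (hf ω))]
      simp [mul_comm]
    have h2 : ∀ᵐ p ∂(P ⊗ₘ η), C p.2 S = f p.2 := by
      rw [← hsnd] at h1
      exact ae_of_ae_map measurable_snd.aemeasurable h1
    have h3 : ∀ᵐ p ∂(P ⊗ₘ η), f p.2 = κ p.1 S := by
      rw [Measure.ae_compProd_iff]
      · exact ae_of_all _ hf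
      · exact measurableSet_eq_fun (hfm.comp measurable_snd)
          ((κ.measurable_coe hS).comp measurable_fst)
    filter_upwards [h2, h3] with p h2 h3
    rw [h2, h3]
  calc P.map κ = ((P ⊗ₘ η).map Prod.fst).map κ := by
        congr 1; exact (Measure.fst_compProd P η).symm
    _ = (P ⊗ₘ η).map (fun p => κ p.1) := Measure.map_map κ.measurable measurable_fst
    _ = (P ⊗ₘ η).map (fun p => C p.2) := Measure.map_congr key
    _ = ((P ⊗ₘ η).map Prod.snd).map C := (Measure.map_map C.measurable measurable_snd).symm
    _ = _ := by congr 1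

theorem measurable_infinitePi_aux {Ω E : Type*} [MeasurableSpace Ω] [MeasurableSpace E]
    (κ : Ω → Measure E) (hκ : Measurable κ) [∀ ω, IsProbabilityMeasure (κ ω)] :
    Measurable (fun ω => Measure.infinitePi (fun _ : ℕ => κ ω)) := by
  refine Measurable.measure_of_isPiSystem_of_isProbabilityMeasure
    (generateFrom_squareCylinders (α := fun _ : ℕ => E)).symm
    (isPiSystem_squareCylinders (fun _ => MeasurableSpace.isPiSystem_measurableSet)
      (fun _ => MeasurableSet.univ)) ?_
  rintro _ ⟨s, t, ht, rfl⟩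
  have ht' : ∀ i, MeasurableSet (t i) := fun i => ht i (Set.mem_univ i)
  have : (fun ω => Measure.infinitePi (fun _ : ℕ => κ ω) ((s : Set ℕ).pi t))
      = fun ω => ∏ i ∈ s, κ ω (t i) := by
    ext ω; exact Measure.infinitePi_pi _ (fun i _ => ht' i)
  rw [this]
  exact Finset.measurable_prod _ fun i _ => (Measure.measurable_coe (ht' i)).comp hκ

/-- Replace measures that are not probability measures by a Dirac mass. -/
noncomputable def normMeas {E : Type*} [MeasurableSpace E] (e : E) (μ : Measure E) : Measure E :=
  open Classical in if μ Set.univ = 1 then μ else Measure.dirac e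

theorem normMeas_eq {E : Type*} [MeasurableSpace E] (e : E) (μ : Measure E)
    [IsProbabilityMeasure μ] : normMeas e μ = μ := by
  simp [normMeas]

instance normMeas_prob {E : Type*} [MeasurableSpace E] (e : E) (μ : Measure E) :
    IsProbabilityMeasure (normMeas e μ) := by
  unfold normMeas
  split_ifs with h
  · exact ⟨h⟩
  · infer_instance

theorem measurable_normMeas {E : Type*} [MeasurableSpace E] (e : E) :
    Measurable (normMeas e) := by
  unfold normMeas
  refine Measurable.ite ?_ measurable_id measurable_const
  exact (Measure.measurable_coe MeasurableSet.univ) (measurableSet_singleton 1)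

/-- The joint law of the replicas and the sample. -/
noncomputable def jointLaw {A : Type*} [MeasurableSpace A] (e : ℕ → A) (μ : Measure (ℕ → A)) :
    Measure ((ℕ → ℕ → A) × (ℕ → A)) :=
  ((Measure.infinitePi (fun _ : ℕ => normMeas e μ)).map (fun z n j => z j n)).prod (normMeas e μ)

theorem measurable_swap_aux {A : Type*} [MeasurableSpace A] :
    Measurable (fun (z : ℕ → ℕ → A) n j => z j n) := by
  refine measurable_pi_lambda _ fun n => measurable_pi_lambda _ fun j => ?_
  exact (measurable_pi_apply n).comp (measurable_pi_apply j)

theorem measurable_prod_aux {Ω W E : Type*} [MeasurableSpace Ω] [MeasurableSpace W]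
    [MeasurableSpace E] (η : Ω → Measure W) (κ : Ω → Measure E) (hη : Measurable η)
    (hκ : Measurable κ) [∀ ω, IsProbabilityMeasure (η ω)] [∀ ω, IsProbabilityMeasure (κ ω)] :
    Measurable (fun ω => (η ω).prod (κ ω)) := by
  let η' : Kernel Ω W := ⟨η, hη⟩
  let κ' : Kernel Ω E := ⟨κ, hκ⟩
  have : IsMarkovKernel η' := ⟨fun ω => inferInstanceAs (IsProbabilityMeasure (η ω))⟩
  have : IsMarkovKernel κ' := ⟨fun ω => inferInstanceAs (IsProbabilityMeasure (κ ω))⟩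
  have h := (η' ×ₖ κ').measurable
  have e : ⇑(η' ×ₖ κ') = fun ω => (η ω).prod (κ ω) := funext fun ω => Kernel.prod_apply _ _ ω
  rwa [e] at h

theorem measurable_jointLaw {A : Type*} [MeasurableSpace A] (e : ℕ → A) :
    Measurable (jointLaw e) := by
  have (μ : Measure (ℕ → A)) : IsProbabilityMeasure
      ((Measure.infinitePi (fun _ : ℕ => normMeas e μ)).map (fun z n j => z j n)) :=
    Measure.isProbabilityMeasure_map measurable_swap_aux.aemeasurable
  exact measurable_prod_aux _ _ ((Measure.measurable_map _ measurable_swap_aux).comp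
    (measurable_infinitePi_aux _ (measurable_normMeas e))) (measurable_normMeas e)

theorem jointLaw_map {A : Type*} [MeasurableSpace A] (e : ℕ → A) (μ : Measure (ℕ → A))
    [IsProbabilityMeasure μ] (σ : Equiv.Perm ℕ) :
    (jointLaw e μ).map (Prod.map (fun y n => y (σ n)) (fun x n => x (σ n)))
      = jointLaw e (μ.map (fun x n => x (σ n))) := by
  have hs : Measurable (fun (x : ℕ → A) n => x (σ n)) :=
    measurable_pi_lambda _ fun n => measurable_pi_apply _
  have hs' : Measurable (fun (y : ℕ → ℕ → A) n => y (σ n)) :=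
    measurable_pi_lambda _ fun n => measurable_pi_apply _
  have : IsProbabilityMeasure (μ.map (fun x n => x (σ n))) :=
    Measure.isProbabilityMeasure_map hs.aemeasurable
  have : IsProbabilityMeasure
      ((Measure.infinitePi (fun _ : ℕ => μ)).map (fun z n j => z j n)) :=
    Measure.isProbabilityMeasure_map measurable_swap_aux.aemeasurable
  unfold jointLaw
  simp only [normMeas_eq]
  rw [← Measure.map_prod_map _ _ hs' hs, Measure.map_map hs' measurable_swap_aux,
    ← Measure.infinitePi_map_pi (fun _ : ℕ => μ) (f := fun _ x n => x (σ n)) (fun _ => hs),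
    Measure.map_map measurable_swap_aux (by fun_prop)]
  rfl

theorem bind_map_aux {Ω W V : Type*} [MeasurableSpace Ω] [MeasurableSpace W]
    [MeasurableSpace V] (P : Measure Ω) (f : Ω → W) (hf : Measurable f) (G : W → Measure V)
    (hG : Measurable G) : (P.map f).bind G = P.bind (fun ω => G (f ω)) := by
  unfold Measure.bind
  rw [Measure.map_map hG hf]
  rfl

theorem map_bind_aux {Ω W V : Type*} [MeasurableSpace Ω] [MeasurableSpace W]
    [MeasurableSpace V] (P : Measure Ω) (G : Ω → Measure W) (hG : Measurable G) (f : W → V)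
    (hf : Measurable f) : (P.bind G).map f = P.bind (fun ω => (G ω).map f) := by
  have h : Measurable (fun ω => (G ω).map f) := (Measure.measurable_map f hf).comp hG
  ext s hs
  rw [Measure.map_apply hf hs, Measure.bind_apply (hf hs) hG.aemeasurable,
    Measure.bind_apply hs h.aemeasurable]
  exact lintegral_congr fun ω => (Measure.map_apply hf hs).symm

/-- Replica trick in one dimension: if `𝛍` is an exchangeable random measure on `A^ℕ` for a
compact metric space `A`, then there are a probability space and an exchangeable sequence
`(Y_n, X_n)_n` of `(A^ℕ × A)`-valued random variables such that `𝛍` has the same law, as a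
random measure, as the conditional distribution of `(X_n)_n` given `(Y_n)_n`. -/
theorem replica_trick {Ω A : Type*} [MeasurableSpace Ω]
    [MetricSpace A] [CompactSpace A] [MeasurableSpace A] [BorelSpace A] [Nonempty A]
    (P : Measure Ω) [IsProbabilityMeasure P]
    (M : Ω → Measure (ℕ → A)) (hM_meas : Measurable M)
    (hM_prob : ∀ ω, IsProbabilityMeasure (M ω))
    (hERM : ∀ σ, FinitelySupported σ →
      P.map (fun ω => (M ω).map (fun x n => x (σ n))) = P.map M) :
    ∃ (Ω' : Type) (_ : MeasurableSpace Ω') (P' : Measure Ω')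
      (_ : IsProbabilityMeasure P')
      (Y : Ω' → ℕ → (ℕ → A)) (X : Ω' → ℕ → A),
      Measurable Y ∧ Measurable X ∧
      (∀ σ, FinitelySupported σ →
        P'.map (fun ω => fun n => (Y ω (σ n), X ω (σ n)))
          = P'.map (fun ω => fun n => (Y ω n, X ω n))) ∧
      P.map M = P'.map (fun ω => (condDistrib X Y P') (Y ω)) := by
  have e : ℕ → A := Classical.choice inferInstance
  have hs (σ : Equiv.Perm ℕ) : Measurable (fun (x : ℕ → A) n => x (σ n)) :=
    measurable_pi_lambda _ fun n => measurable_pi_apply _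
  have hs' (σ : Equiv.Perm ℕ) : Measurable (fun (y : ℕ → ℕ → A) n => y (σ n)) :=
    measurable_pi_lambda _ fun n => measurable_pi_apply _
  -- the kernel of replicas
  let κ : Kernel Ω (ℕ → A) := ⟨M, hM_meas⟩
  have hκ : IsMarkovKernel κ := ⟨hM_prob⟩
  let η : Kernel Ω (ℕ → ℕ → A) :=
    ⟨fun ω => (Measure.infinitePi (fun _ : ℕ => M ω)).map (fun (z : ℕ → ℕ → A) n j => z j n),
      (Measure.measurable_map _ measurable_swap_aux).comp (measurable_infinitePi_aux M hM_meas)⟩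
  have hη : IsMarkovKernel η :=
    ⟨fun ω => Measure.isProbabilityMeasure_map measurable_swap_aux.aemeasurable⟩
  have hJ : ∀ ω, jointLaw e (M ω) = (η ω).prod (κ ω) := by
    intro ω
    unfold jointLaw
    simp only [normMeas_eq]
    rfl
  let Q : Measure ((ℕ → ℕ → A) × (ℕ → A)) := P.bind (fun ω => jointLaw e (M ω))
  have hJm : Measurable (fun ω => jointLaw e (M ω)) := (measurable_jointLaw e).comp hM_meas
  have hQ : IsProbabilityMeasure Q := by
    refine ⟨?_⟩
    rw [Measure.bind_apply MeasurableSet.univ hJm.aemeasurable]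
    simp [hJ]
  have hQfst : Q.map Prod.fst = P.bind η := by
    rw [map_bind_aux P _ hJm _ measurable_fst]
    congr 1
    funext ω
    rw [hJ]
    exact Measure.fst_prod
  -- transport to a space in `Type`
  have i1 : StandardBorelSpace A := inferInstance
  have i2 : StandardBorelSpace (ℕ → A) := inferInstance
  have i3 : StandardBorelSpace (ℕ → ℕ → A) := StandardBorelSpace.pi_countable
  obtain ⟨g, hg⟩ := exists_measurableEmbedding_real ((ℕ → ℕ → A) × (ℕ → A))
  let φ := hg.equivRange
  have hback : (Q.map φ).map φ.symm = Q := by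
    rw [Measure.map_map φ.symm.measurable φ.measurable]
    simp
  have hX : Measurable (fun w => (φ.symm w).2) := measurable_snd.comp φ.symm.measurable
  have hY : Measurable (fun w => (φ.symm w).1) := measurable_fst.comp φ.symm.measurable
  have hP' : IsProbabilityMeasure (Q.map φ) :=
    Measure.isProbabilityMeasure_map φ.measurable.aemeasurable
  refine ⟨Set.range g, inferInstance, Q.map φ, hP', fun w => (φ.symm w).1,
    fun w => (φ.symm w).2, hY, hX, ?_, ?_⟩
  · intro σ hσ
    have hτ : Measurable (fun (p : (ℕ → ℕ → A) × (ℕ → A)) n => (p.1 n, p.2 n)) := by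
      refine measurable_pi_lambda _ fun n => ?_
      exact ((measurable_pi_apply n).comp measurable_fst).prodMk
        ((measurable_pi_apply n).comp measurable_snd)
    have hinv : Q.map (Prod.map (fun y n => y (σ n)) (fun x n => x (σ n))) = Q := by
      rw [map_bind_aux P _ hJm _ ((hs' σ).prodMap (hs σ))]
      simp only [jointLaw_map]
      rw [← bind_map_aux P (fun ω => (M ω).map (fun (x : ℕ → A) n => x (σ n)))
        ((Measure.measurable_map _ (hs σ)).comp hM_meas) _ (measurable_jointLaw e), hERM σ hσ,
        bind_map_aux P M hM_meas _ (measurable_jointLaw e)]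
    have e1 : (Q.map φ).map (fun ω => fun n => ((φ.symm ω).1 n, (φ.symm ω).2 n))
        = Q.map (fun p n => (p.1 n, p.2 n)) := by
      conv_rhs => rw [← hback]
      rw [Measure.map_map hτ φ.symm.measurable]
      rfl
    have e2 : (Q.map φ).map (fun ω => fun n => ((φ.symm ω).1 (σ n), (φ.symm ω).2 (σ n)))
        = (Q.map (Prod.map (fun y n => y (σ n)) (fun x n => x (σ n)))).map
          (fun p n => (p.1 n, p.2 n)) := by
      conv_rhs => rw [← hback]
      rw [Measure.map_map ((hs' σ).prodMap (hs σ)) φ.symm.measurable,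
        Measure.map_map hτ (((hs' σ).prodMap (hs σ)).comp φ.symm.measurable)]
      rfl
    rw [e2, hinv, e1]
  · have hYlaw : (Q.map φ).map (fun w => (φ.symm w).1) = P.bind η := by
      rw [← hQfst]
      conv_rhs => rw [← hback]
      rw [Measure.map_map measurable_fst φ.symm.measurable]
      rfl
    have hC := compProd_map_condDistrib (mβ := MeasurableSpace.pi) (μ := Q.map φ) (X := fun w => (φ.symm w).1)
      (Y := fun w => (φ.symm w).2) hX.aemeasurable
    have hC' : (Q.map φ).map (fun a => ((φ.symm a).1, (φ.symm a).2)) = Q := hback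
    rw [hC', hYlaw] at hC
    have hlaw := law_aux P η κ _ (hC.trans ?_) ?_
    · refine Eq.trans hlaw ?_
      rw [← hYlaw, Measure.map_map (Kernel.measurable _) hY]
      rfl
    · show P.bind (fun ω => jointLaw e (M ω)) = _
      simp only [hJ]
    · intro S hS
      obtain ⟨f, hfm, hf⟩ := slln_aux S hS
      refine ⟨fun w => f (fun j n => w n j), hfm.comp measurable_swap_aux, fun ω => ?_⟩
      have h := hf (M ω)
      show ∀ᵐ w ∂((Measure.infinitePi (fun _ : ℕ => M ω)).map (fun z n j => z j n)), _
      rw [ae_map_iff measurable_swap_aux.aemeasurable]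
      · exact h
      · exact measurableSet_eq_fun (hfm.comp measurable_swap_aux) measurable_const
end

section
/- de Finetti–Hewitt–Savage Theorem (strong form): if A is a compact metric space and (X_n)_n is an exchangeable sequence of A-valued random variables, then the empirical distributions W_N := N^{-1} ∑_{n=1}^N δ_{X_n} converge almost surely in Pr(A) to a random measure W such that: (i) W is a.s. a measurable function of (X_n)_n; (ii) W generates the tail σ-algebra of (X_n)_n up to null sets; (iii) the X_n are conditionally i.i.d. given W. -/
open MeasureTheory Filter

/-- Cesàro averages. -/
noncomputable def dfAvg (y : ℕ → ℝ) (N : ℕ) : ℝ := (N : ℝ)⁻¹ * ∑ n ∈ Finset.range N, y n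

lemma dfAvg_abs_le {y : ℕ → ℝ} {C : ℝ} (hC : 0 ≤ C) (hy : ∀ n, |y n| ≤ C) (N : ℕ) :
    |dfAvg y N| ≤ C := by
  unfold dfAvg
  rcases Nat.eq_zero_or_pos N with rfl | hN
  · simpa using hC
  have hN' : (0 : ℝ) < N := by exact_mod_cast hN
  rw [abs_mul, abs_of_pos (inv_pos.2 hN'), inv_mul_le_iff₀ hN']
  calc |∑ n ∈ Finset.range N, y n| ≤ ∑ n ∈ Finset.range N, |y n| :=
        Finset.abs_sum_le_sum_abs _ _
    _ ≤ ∑ n ∈ Finset.range N, C := Finset.sum_le_sum fun i _ => hy i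
    _ = N * C := by simp

lemma dfAvg_shift_one {y : ℕ → ℝ} {l : ℝ} :
    Tendsto (dfAvg fun n => y (n + 1)) atTop (nhds l) ↔ Tendsto (dfAvg y) atTop (nhds l) := by
  have h1 : ∀ N : ℕ, dfAvg (fun n => y (n + 1)) N
      = dfAvg y (N + 1) * (1 + (N : ℝ)⁻¹) - (N : ℝ)⁻¹ * y 0 + (if N = 0 then - y 0 else 0) := by
    intro N
    rcases Nat.eq_zero_or_pos N with rfl | hN
    · simp [dfAvg]
    have hN' : (N : ℝ) ≠ 0 := by positivity
    have hN'' : (N : ℝ) + 1 ≠ 0 := by positivity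
    unfold dfAvg
    rw [Finset.sum_range_succ', if_neg hN.ne']
    push_cast
    field_simp
    ring
  have hi : Tendsto (fun N : ℕ => (N : ℝ)⁻¹) atTop (nhds 0) := tendsto_inv_atTop_nhds_zero_nat
  have hz : Tendsto (fun N : ℕ => if N = 0 then - y 0 else 0) atTop (nhds 0) := by
    apply tendsto_const_nhds.congr'
    filter_upwards [eventually_gt_atTop 0] with N hN
    simp [hN.ne']
  rw [← tendsto_add_atTop_iff_nat (f := dfAvg y) 1]
  constructor
  · intro h
    have h2 : ∀ N : ℕ, dfAvg y (N + 1) =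
      (dfAvg (fun n => y (n + 1)) N + (N : ℝ)⁻¹ * y 0 - (if N = 0 then - y 0 else 0))
        * (1 + (N : ℝ)⁻¹)⁻¹ := by
      intro N
      rw [h1 N]
      have : (1 + (N : ℝ)⁻¹) ≠ 0 := by positivity
      field_simp
      ring
    have := ((h.add (hi.mul_const (y 0))).sub hz).mul ((hi.const_add 1).inv₀ (by norm_num))
    simp only [zero_mul, add_zero, sub_zero, inv_one, mul_one] at this
    exact this.congr fun N => (h2 N).symm
  · intro h
    have := ((h.mul (hi.const_add 1)).sub (hi.mul_const (y 0))).add hz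
    simp only [zero_mul, add_zero, sub_zero, mul_one] at this
    exact this.congr fun N => (h1 N).symm

lemma dfAvg_shift {y : ℕ → ℝ} {l : ℝ} (m : ℕ) :
    Tendsto (dfAvg fun n => y (n + m)) atTop (nhds l) ↔ Tendsto (dfAvg y) atTop (nhds l) := by
  induction m with
  | zero => simp
  | succ m ih =>
    rw [← ih, ← dfAvg_shift_one (y := fun n => y (n + m))]
    have : (fun n => y (n + (m + 1))) = fun n => y (n + 1 + m) := by
      funext n; congr 1; omega
    rw [this]

lemma dfAvg_conv {y : ℕ → ℝ} {C : ℝ} (hy : ∀ n, |y n| ≤ C)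
    (hs : Summable fun k : ℕ => ((k : ℝ) + 1) ^ 2 *
      (dfAvg y ((k + 2) ^ 4) - dfAvg y ((k + 1) ^ 4)) ^ 2) :
    ∃ l, Tendsto (dfAvg y) atTop (nhds l) := by
  have hs1 : Summable fun k : ℕ => dist (dfAvg y ((k + 1) ^ 4)) (dfAvg y ((k + 1 + 1) ^ 4)) := by
    have h2 : Summable fun k : ℕ => 1 / ((k : ℝ) + 1) ^ 2 := by
      have := (summable_nat_add_iff 1).2 (Real.summable_one_div_nat_pow.2 (one_lt_two))
      simpa using this
    refine Summable.of_nonneg_of_le (fun _ => dist_nonneg) (fun k => ?_) (hs.add h2)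
    rw [dist_comm, Real.dist_eq]
    set D := dfAvg y ((k + 1 + 1) ^ 4) - dfAvg y ((k + 1) ^ 4) with hD
    change |D| ≤ ((k : ℝ) + 1) ^ 2 * D ^ 2 + _
    have hk : (0 : ℝ) < k + 1 := by positivity
    set a := (k : ℝ) + 1
    have e : |D| = (a * |D|) * (1 / a) := by field_simp
    have e2 : a ^ 2 * D ^ 2 + 1 / a ^ 2 = (a * |D|) ^ 2 + (1 / a) ^ 2 := by
      rw [mul_pow, sq_abs]; ring
    rw [e2, e]
    have := abs_nonneg D
    have h3 : 0 ≤ (a * |D|) * (1 / a) := by positivity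
    rw [← e]
    nlinarith [sq_nonneg (a * |D| - 1 / a)]
  obtain ⟨l, hl⟩ := cauchySeq_tendsto_of_complete (cauchySeq_of_summable_dist hs1)
  refine ⟨l, ?_⟩
  set u : ℕ → ℝ := fun N => ∑ n ∈ Finset.range N, (y n + C) with hu
  have hue : ∀ N : ℕ, 0 < N → u N / N = dfAvg y N + C := by
    intro N hN
    have hN' : (N : ℝ) ≠ 0 := by positivity
    simp only [hu, Finset.sum_add_distrib, dfAvg]
    simp
    field_simp
  have hm : Monotone u := by
    refine monotone_nat_of_le_succ fun n => ?_
    simp only [hu, Finset.sum_range_succ]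
    linarith [neg_le_of_abs_le (hy n)]
  have key := tendsto_div_of_monotone_of_exists_subseq_tendsto_div u (l + C) hm (by
    intro a ha
    refine ⟨fun k => (k + 1) ^ 4, ?_, ?_, ?_⟩
    · have h0 : Tendsto (fun k : ℕ => (1 + 1 / ((k : ℝ) + 1)) ^ 4) atTop (nhds ((1 + 0) ^ 4)) :=
        (tendsto_one_div_add_atTop_nhds_zero_nat.const_add 1).pow 4
      have h0' := h0.eventually_le_const (u := a) (by simpa using ha)
      filter_upwards [h0'] with k hk
      push_cast
      have hk' : (0 : ℝ) < k + 1 := by positivity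
      calc ((k : ℝ) + 1 + 1) ^ 4 = (1 + 1 / ((k : ℝ) + 1)) ^ 4 * ((k : ℝ) + 1) ^ 4 := by
            rw [← mul_pow]; congr 1; field_simp
        _ ≤ _ := by gcongr
    · exact (tendsto_pow_atTop (by norm_num)).comp (tendsto_add_atTop_nat 1)
    · refine (hl.add_const C).congr fun k => (hue _ (by positivity)).symm)
  have := key.sub_const C
  simp only [add_sub_cancel_right] at this
  refine this.congr' ?_
  filter_upwards [eventually_gt_atTop 0] with N hN
  rw [hue N hN]; ring

lemma df_coef {N M : ℕ} (hN : 0 < N) (hM : N ≤ M) :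
    ∃ c : ℕ → ℝ, (∀ y, dfAvg y M - dfAvg y N = ∑ i ∈ Finset.range M, c i * y i) ∧
      ∑ i ∈ Finset.range M, c i = 0 ∧ ∑ i ∈ Finset.range M, c i ^ 2 ≤ 1 / N := by
  have hN' : (N : ℝ) ≠ 0 := by positivity
  have hM0 : 0 < M := by omega
  have hM' : (M : ℝ) ≠ 0 := by positivity
  obtain ⟨d, rfl⟩ := Nat.exists_eq_add_of_le hM
  have hN1 : (0 : ℝ) < N := by positivity
  have hd : (0 : ℝ) ≤ d := by positivity
  refine ⟨fun i => (((N + d : ℕ) : ℝ))⁻¹ - (if i < N then (N : ℝ)⁻¹ else 0), ?_, ?_, ?_⟩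
  · intro y
    simp only [dfAvg, sub_mul, Finset.sum_sub_distrib, Finset.mul_sum]
    congr 1
    rw [Finset.sum_range_add]
    simp only [ite_mul, zero_mul]
    rw [Finset.sum_congr rfl (fun i hi => if_pos (Finset.mem_range.1 hi))]
    simp
  · rw [Finset.sum_range_add]
    rw [Finset.sum_congr rfl (fun i hi => by rw [if_pos (Finset.mem_range.1 hi)])]
    simp
    push_cast at hM'
    field_simp
    ring
  · rw [Finset.sum_range_add]
    beta_reduce
    rw [Finset.sum_congr rfl (fun i hi => by rw [if_pos (Finset.mem_range.1 hi)])]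
    simp
    push_cast at hM'
    have : (N : ℝ) * (((N : ℝ) + d)⁻¹ - (N : ℝ)⁻¹) ^ 2 + d * (((N : ℝ) + d) ^ 2)⁻¹ =
      (N : ℝ)⁻¹ - ((N : ℝ) + d)⁻¹ := by
      field_simp
      ring
    rw [this]
    have : 0 ≤ ((N : ℝ) + d)⁻¹ := by positivity
    linarith

/-- Exchangeability. -/
def DFExch {Ω A : Type*} [MeasurableSpace Ω] [MeasurableSpace A] (P : Measure Ω)
    (X : ℕ → Ω → A) : Prop :=
  ∀ σ, FinitelySupported σ →
      P.map (fun ω => fun n => X (σ n) ω) = P.map (fun ω => fun n => X n ω)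

/-- The tail σ-algebra. -/
@[reducible] def dfTail {Ω A : Type*} [MeasurableSpace A] (X : ℕ → Ω → A) : MeasurableSpace Ω :=
  ⨅ N : ℕ, MeasurableSpace.comap (fun ω => fun n => X (n + N) ω) inferInstance

lemma df_fs_swap (a b : ℕ) : FinitelySupported (Equiv.swap a b) := by
  refine (Set.toFinite {a, b}).subset fun n hn => ?_
  by_contra h
  simp only [Set.mem_insert_iff, Set.mem_singleton_iff, not_or] at h
  exact hn (Equiv.swap_apply_of_ne_of_ne h.1 h.2)

lemma df_fs_mul {σ τ : Equiv.Perm ℕ} (h : FinitelySupported σ) (h' : FinitelySupported τ) :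
    FinitelySupported (σ * τ) := by
  refine (Set.Finite.union h h').subset fun n hn => ?_
  by_contra hc
  simp only [Set.mem_union, Set.mem_ofPred_eq, not_or, not_not] at hc
  exact hn (by rw [Equiv.Perm.mul_apply, hc.2, hc.1])

lemma df_perm {i j : ℕ} (hij : i ≠ j) :
    ∃ σ : Equiv.Perm ℕ, FinitelySupported σ ∧ σ 0 = i ∧ σ 1 = j := by
  refine ⟨Equiv.swap j (Equiv.swap 0 i 1) * Equiv.swap 0 i,
    df_fs_mul (df_fs_swap _ _) (df_fs_swap _ _), ?_, ?_⟩
  · rw [Equiv.Perm.mul_apply, Equiv.swap_apply_left]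
    refine Equiv.swap_apply_of_ne_of_ne hij ?_
    intro h
    have h2 : Equiv.swap 0 i 0 = Equiv.swap 0 i 1 := by rw [Equiv.swap_apply_left]; exact h
    exact absurd ((Equiv.swap 0 i).injective h2) (by norm_num)
  · rw [Equiv.Perm.mul_apply, Equiv.swap_apply_right]

section
variable {Ω A : Type*} [MeasurableSpace Ω] [MeasurableSpace A]
    {P : Measure Ω} [IsProbabilityMeasure P]
    {X : ℕ → Ω → A}

lemma df_exch_integral (hX : ∀ n, Measurable (X n)) (hexch : DFExch P X)
    {σ : Equiv.Perm ℕ} (hσ : FinitelySupported σ) {Φ : (ℕ → A) → ℝ} (hΦ : Measurable Φ) :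
    ∫ ω, Φ (fun n => X (σ n) ω) ∂P = ∫ ω, Φ (fun n => X n ω) ∂P := by
  have h1 : Measurable (fun ω => fun n => X (σ n) ω) := measurable_pi_lambda _ fun n => hX _
  have h2 : Measurable (fun ω => fun n => X n ω) := measurable_pi_lambda _ fun n => hX _
  rw [← integral_map h1.aemeasurable hΦ.aestronglyMeasurable,
    ← integral_map h2.aemeasurable hΦ.aestronglyMeasurable, hexch σ hσ]

lemma df_int {C : ℝ} {g : Ω → ℝ} (hg : Measurable g) (hC : ∀ ω, |g ω| ≤ C) : Integrable g P :=
  Integrable.of_bound hg.aestronglyMeasurable C (ae_of_all _ hC)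

lemma df_var (hX : ∀ n, Measurable (X n)) (hexch : DFExch P X)
    {f : A → ℝ} (hf : Measurable f) {C : ℝ} (hC : ∀ a, |f a| ≤ C) {N M : ℕ} (hN : 0 < N)
    (hM : N ≤ M) :
    ∫ ω, (dfAvg (fun n => f (X n ω)) M - dfAvg (fun n => f (X n ω)) N) ^ 2 ∂P
      ≤ 2 * C ^ 2 * (1 / N) := by
  obtain ⟨c, h1, h2, h3⟩ := df_coef hN hM
  have hXm : ∀ i, Measurable fun ω => f (X i ω) := fun i => hf.comp (hX i)
  set a := ∫ ω, f (X 0 ω) * f (X 0 ω) ∂P with ha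
  set b := ∫ ω, f (X 0 ω) * f (X 1 ω) ∂P with hb
  have hbd : ∀ i j ω, |f (X i ω) * f (X j ω)| ≤ C ^ 2 := by
    intro i j ω
    rw [abs_mul, sq]
    exact mul_le_mul (hC _) (hC _) (abs_nonneg _) ((abs_nonneg _).trans (hC (X i ω)))
  have hI : ∀ i j, Integrable (fun ω => f (X i ω) * f (X j ω)) P := fun i j =>
    df_int ((hXm i).mul (hXm j)) (hbd i j)
  have hab : ∀ i j, ∫ ω, f (X i ω) * f (X j ω) ∂P = b + (if i = j then a - b else 0) := by
    intro i j
    by_cases hij : i = j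
    · subst hij
      have := df_exch_integral (P := P) hX hexch (df_fs_swap 0 i)
        (Φ := fun x => f (x 0) * f (x 0)) (by fun_prop)
      simp only [Equiv.swap_apply_left] at this
      simp [this, ha]
    · obtain ⟨σ, hσ, rfl, rfl⟩ := df_perm hij
      have := df_exch_integral (P := P) hX hexch hσ
        (Φ := fun x => f (x 0) * f (x 1)) (by fun_prop)
      simp only at this
      rw [this, if_neg hij, add_zero]
  have hbound : ∀ i j, |∫ ω, f (X i ω) * f (X j ω) ∂P| ≤ C ^ 2 := by
    intro i j
    have := norm_integral_le_of_norm_le_const (μ := P) (C := C ^ 2)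
      (f := fun ω => f (X i ω) * f (X j ω)) (ae_of_all _ (hbd i j))
    simpa using this
  have e : ∫ ω, (dfAvg (fun n => f (X n ω)) M - dfAvg (fun n => f (X n ω)) N) ^ 2 ∂P
      = (a - b) * ∑ i ∈ Finset.range M, c i ^ 2 := by
    simp only [h1, sq, Finset.sum_mul_sum]
    rw [integral_finsetSum]
    swap
    · intro i _
      refine integrable_finsetSum _ fun j _ => ?_
      exact ((hI i j).const_mul (c i * c j)).congr (ae_of_all _ fun ω => by simp; ring)
    have : ∀ i ∈ Finset.range M, ∫ ω, ∑ j ∈ Finset.range M,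
        c i * f (X i ω) * (c j * f (X j ω)) ∂P
        = c i * b * ∑ j ∈ Finset.range M, c j + (a - b) * (c i * c i) := by
      intro i hi
      rw [integral_finsetSum]
      · have : ∀ j, ∫ ω, c i * f (X i ω) * (c j * f (X j ω)) ∂P
          = c i * b * c j + (if i = j then (a - b) * (c i * c j) else 0) := by
          intro j
          have : (fun ω => c i * f (X i ω) * (c j * f (X j ω)))
            = fun ω => (c i * c j) * (f (X i ω) * f (X j ω)) := by funext ω; ring
          rw [this, integral_const_mul, hab]
          split_ifs <;> ring
        simp only [this, Finset.sum_add_distrib, ← Finset.mul_sum]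
        rw [Finset.sum_ite_eq, if_pos hi]
      · intro j _
        exact ((hI i j).const_mul (c i * c j)).congr (ae_of_all _ fun ω => by simp; ring)
    rw [Finset.sum_congr rfl this, Finset.sum_add_distrib, h2, Finset.mul_sum]
    simp
  rw [e]
  have h4 : a - b ≤ 2 * C ^ 2 := by
    have := abs_le.1 (hbound 0 0); have := abs_le.1 (hbound 0 1); linarith
  have h5 : 0 ≤ ∑ i ∈ Finset.range M, c i ^ 2 := Finset.sum_nonneg fun i _ => sq_nonneg _
  exact mul_le_mul h4 h3 h5 (by positivity)

lemma df_measurable_avg {f : A → ℝ} (hf : Measurable f) (N : ℕ) :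
    Measurable fun x : ℕ → A => dfAvg (fun n => f (x n)) N := by
  unfold dfAvg
  fun_prop

lemma df_ae_conv (hX : ∀ n, Measurable (X n)) (hexch : DFExch P X)
    {f : A → ℝ} (hf : Measurable f) {C : ℝ} (hC : ∀ a, |f a| ≤ C) :
    ∀ᵐ ω ∂P, ∃ l, Tendsto (dfAvg fun n => f (X n ω)) atTop (nhds l) := by
  have hXX : Measurable (fun ω => fun n => X n ω) := measurable_pi_lambda _ fun n => hX _
  have hm : ∀ N, Measurable fun ω => dfAvg (fun n => f (X n ω)) N :=
    fun N => (df_measurable_avg hf N).comp hXX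
  set g : ℕ → Ω → ℝ := fun k ω => ((k : ℝ) + 1) ^ 2 *
      (dfAvg (fun n => f (X n ω)) ((k + 2) ^ 4) - dfAvg (fun n => f (X n ω)) ((k + 1) ^ 4)) ^ 2
    with hg
  have hgm : ∀ k, Measurable (g k) := fun k =>
    (((hm _).sub (hm _)).pow_const 2).const_mul _
  have hg0 : ∀ k ω, 0 ≤ g k ω := fun k ω => by positivity
  have hgi : ∀ k, Integrable (g k) P := by
    intro k
    obtain ⟨ω0⟩ := nonempty_of_isProbabilityMeasure P
    have hC0 : 0 ≤ C := (abs_nonneg _).trans (hC (X 0 ω0))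
    refine Integrable.const_mul ?_ _
    refine df_int (C := (C + C) ^ 2) (((hm _).sub (hm _)).pow_const 2) fun ω => ?_
    rw [abs_pow]
    gcongr
    refine (abs_sub _ _).trans (add_le_add ?_ ?_) <;>
    exact dfAvg_abs_le hC0 (fun n => hC _) _
  have hint : ∀ k, ∫ ω, g k ω ∂P ≤ 2 * C ^ 2 * (1 / ((k : ℝ) + 1) ^ 2) := by
    intro k
    have := df_var (P := P) hX hexch hf hC (N := (k + 1) ^ 4) (M := (k + 2) ^ 4) (by positivity)
      (by gcongr; omega)
    simp only [hg, integral_const_mul]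
    calc _ ≤ ((k : ℝ) + 1) ^ 2 * (2 * C ^ 2 * (1 / ((k + 1) ^ 4 : ℕ))) := by gcongr
      _ = _ := by push_cast; field_simp
  have hsum : Summable fun k : ℕ => 2 * C ^ 2 * (1 / ((k : ℝ) + 1) ^ 2) := by
    have := (summable_nat_add_iff 1).2 (Real.summable_one_div_nat_pow.2 (one_lt_two))
    refine Summable.mul_left _ ?_
    simpa using this
  have hfin : ∫⁻ ω, ∑' k, ENNReal.ofReal (g k ω) ∂P ≠ ⊤ := by
    rw [lintegral_tsum fun k => (hgm k).ennreal_ofReal.aemeasurable]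
    have : ∀ k, ∫⁻ ω, ENNReal.ofReal (g k ω) ∂P = ENNReal.ofReal (∫ ω, g k ω ∂P) := fun k =>
      (ofReal_integral_eq_lintegral_ofReal (hgi k) (ae_of_all _ (hg0 k))).symm
    simp only [this]
    refine ne_top_of_le_ne_top ?_ (ENNReal.tsum_le_tsum fun k => ENNReal.ofReal_le_ofReal (hint k))
    exact hsum.tsum_ofReal_ne_top
  have hae := ae_lt_top' (AEMeasurable.tsum fun k =>
    (hgm k).ennreal_ofReal.aemeasurable) hfin
  filter_upwards [hae] with ω hω
  refine dfAvg_conv (C := C) (fun n => hC _) ?_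
  have := ENNReal.summable_toReal hω.ne
  refine this.congr fun k => ?_
  rw [ENNReal.toReal_ofReal (hg0 k ω)]

lemma df_step_perm (hX : ∀ n, Measurable (X n)) (hexch : DFExch P X)
    {H : Ω → ℝ} (hH : Measurable[dfTail X] H) 
    {f : A → ℝ} (hf : Measurable f) {g : ℕ → A → ℝ} (hg : ∀ j, Measurable (g j)) (m i : ℕ) :
    ∫ ω, H ω * (∏ j ∈ Finset.range m, g j (X j ω)) * f (X (i + m) ω) ∂P =
    ∫ ω, H ω * (∏ j ∈ Finset.range m, g j (X j ω)) * f (X m ω) ∂P := by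
  have hH' : Measurable[MeasurableSpace.comap (fun ω => fun n => X (n + (i + m + 1)) ω)
      inferInstance] H := hH.mono (iInf_le _ _) le_rfl
  obtain ⟨h, hh, rfl⟩ := hH'.exists_eq_measurable_comp
  have := df_exch_integral (P := P) hX hexch (df_fs_swap m (i + m))
    (Φ := fun x => h (fun n => x (n + (i + m + 1))) * (∏ j ∈ Finset.range m, g j (x j)) * f (x m))
    (by
      have h1 : Measurable fun x : ℕ → A => h (fun n => x (n + (i + m + 1))) :=
        hh.comp (measurable_pi_lambda _ fun n => measurable_pi_apply _)
      have h2 : Measurable fun x : ℕ → A => ∏ j ∈ Finset.range m, g j (x j) :=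
        Finset.measurable_fun_prod _ fun j _ => (hg j).comp (measurable_pi_apply j)
      exact (h1.mul h2).mul (hf.comp (measurable_pi_apply m)))
  simp only [Function.comp]
  rw [← this]
  congr 1
  funext ω
  simp only [Equiv.swap_apply_left]
  congr 2
  · congr 1
    funext n
    rw [Equiv.swap_apply_of_ne_of_ne (by omega) (by omega)]
  · refine Finset.prod_congr rfl fun j hj => ?_
    have := Finset.mem_range.1 hj
    rw [Equiv.swap_apply_of_ne_of_ne (by omega) (by omega)]

lemma dfTail_le (hX : ∀ n, Measurable (X n)) : dfTail X ≤ (inferInstance : MeasurableSpace Ω) :=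
  (iInf_le _ 0).trans (Measurable.comap_le (measurable_pi_lambda _ fun n => hX _))

lemma df_step (hX : ∀ n, Measurable (X n)) (hexch : DFExch P X)
    {H : Ω → ℝ} (hH : Measurable[dfTail X] H) (hHi : Integrable H P)
    {f : A → ℝ} (hf : Measurable f) {C : ℝ} (hC : ∀ a, |f a| ≤ C)
    {g : ℕ → A → ℝ} (hg : ∀ j, Measurable (g j)) (hg1 : ∀ j a, |g j a| ≤ 1) (m : ℕ)
    {L : Ω → ℝ} (hL : ∀ᵐ ω ∂P, Tendsto (dfAvg fun n => f (X n ω)) atTop (nhds (L ω))) :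
    ∫ ω, H ω * (∏ j ∈ Finset.range m, g j (X j ω)) * f (X m ω) ∂P =
    ∫ ω, H ω * (∏ j ∈ Finset.range m, g j (X j ω)) * L ω ∂P := by
  obtain ⟨ω0⟩ := nonempty_of_isProbabilityMeasure P
  have hC0 : 0 ≤ C := (abs_nonneg _).trans (hC (X 0 ω0))
  set G : Ω → ℝ := fun ω => H ω * (∏ j ∈ Finset.range m, g j (X j ω)) with hG
  have hpm : Measurable fun ω => ∏ j ∈ Finset.range m, g j (X j ω) :=
    Finset.measurable_fun_prod _ fun j _ => (hg j).comp (hX j)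
  have hGi : Integrable G P := by
    refine hHi.mul_bdd (c := 1) hpm.aestronglyMeasurable (ae_of_all _ fun ω => ?_)
    rw [Real.norm_eq_abs, Finset.abs_prod]
    exact Finset.prod_le_one (fun _ _ => abs_nonneg _) fun j _ => hg1 _ _
  have hGf : ∀ n, Integrable (fun ω => G ω * f (X n ω)) P := fun n =>
    hGi.mul_bdd (c := C) (hf.comp (hX n)).aestronglyMeasurable (ae_of_all _ fun ω => hC _)
  have hXX : Measurable (fun ω => fun n => X (n + m) ω) := measurable_pi_lambda _ fun n => hX _
  have hm : ∀ N, Measurable fun ω => dfAvg (fun n => f (X (n + m) ω)) N :=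
    fun N => (df_measurable_avg hf N).comp hXX
  have key : Tendsto (fun N => ∫ ω, G ω * dfAvg (fun n => f (X (n + m) ω)) N ∂P) atTop
      (nhds (∫ ω, G ω * L ω ∂P)) := by
    refine tendsto_integral_of_dominated_convergence (fun ω => |G ω| * C)
      (fun N => hGi.aestronglyMeasurable.mul (hm N).aestronglyMeasurable)
      (hGi.abs.mul_const C) (fun N => ae_of_all _ fun ω => ?_) ?_
    · rw [norm_mul, Real.norm_eq_abs, Real.norm_eq_abs]
      gcongr
      exact dfAvg_abs_le hC0 (fun n => hC _) _
    · filter_upwards [hL] with ω hω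
      exact ((dfAvg_shift (y := fun n => f (X n ω)) m).2 hω).const_mul _
  refine tendsto_nhds_unique ?_ key
  refine tendsto_const_nhds.congr' ?_
  filter_upwards [eventually_gt_atTop 0] with N hN
  have hN' : (N : ℝ) ≠ 0 := by positivity
  have : ∀ ω, G ω * dfAvg (fun n => f (X (n + m) ω)) N
      = (N : ℝ)⁻¹ * ∑ i ∈ Finset.range N, G ω * f (X (i + m) ω) := by
    intro ω
    rw [dfAvg, ← Finset.mul_sum]; ring
  simp only [this]
  rw [integral_const_mul, integral_finsetSum _ fun i _ => hGf _]
  have h2 : ∀ i ∈ Finset.range N, ∫ ω, G ω * f (X (i + m) ω) ∂P = ∫ ω, G ω * f (X m ω) ∂P :=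
    fun i _ => df_step_perm hX hexch hH hf hg m i
  rw [Finset.sum_congr rfl h2]
  simp
  field_simp
  rfl
end

/-- Path space with the tail σ-algebra. -/
def DFTailSp (A : Type*) := ℕ → A

instance {A : Type*} [MeasurableSpace A] : MeasurableSpace (DFTailSp A) :=
  dfTail (Ω := ℕ → A) (fun n x => x n)

section
variable {Ω A : Type*} [MeasurableSpace Ω] [MeasurableSpace A]
    {P : Measure Ω} [IsProbabilityMeasure P]
    {X : ℕ → Ω → A}

/-- The path map. -/
def dfPath (X : ℕ → Ω → A) (ω : Ω) : DFTailSp A := fun n => X n ω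

lemma dfPath_measurable_tail : Measurable[dfTail X] (dfPath X) := by
  intro s hs
  have hs' := MeasurableSpace.measurableSet_iInf.1 hs
  refine MeasurableSpace.measurableSet_iInf.2 fun N => ?_
  obtain ⟨B, hB, hBs⟩ := hs' N
  refine ⟨B, hB, ?_⟩
  rw [← hBs]
  rfl

lemma df_id_measurable :
    @Measurable (ℕ → A) (DFTailSp A) inferInstance inferInstance (fun x => x) := by
  intro s hs
  exact dfTail_le (X := fun n (x : ℕ → A) => x n) (fun n => measurable_pi_apply n) s hs

lemma dfPath_measurable (hX : ∀ n, Measurable (X n)) : Measurable (dfPath X) :=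
  dfPath_measurable_tail.mono (dfTail_le hX) le_rfl

lemma df_limUnder_meas {f : A → ℝ} (hf : Measurable f) :
    Measurable (fun x : DFTailSp A => limUnder atTop (dfAvg fun n => f (x n))) := by
  intro s hs
  refine MeasurableSpace.measurableSet_iInf.2 fun N => ?_
  have hm : Measurable (fun x : ℕ → A => limUnder atTop (dfAvg fun n => f (x n))) :=
    (StronglyMeasurable.limUnder (f := fun N (x : ℕ → A) => dfAvg (fun n => f (x n)) N)
      fun N => (df_measurable_avg hf N).stronglyMeasurable).measurable
  refine ⟨_, hm hs, ?_⟩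
  ext x
  simp only [Set.mem_preimage]
  have : limUnder atTop (dfAvg fun n => f (x (n + N))) = limUnder atTop (dfAvg fun n => f (x n)) := by
    unfold limUnder lim
    congr 1
    funext l
    exact propext (dfAvg_shift (y := fun n => f (x n)) N)
  rw [this]
  rfl

/-- The directing random measure as a function of the path. -/
noncomputable def dfG (P : Measure Ω) [IsProbabilityMeasure P] (X : ℕ → Ω → A) [StandardBorelSpace A]
    [Nonempty A] : ProbabilityTheory.Kernel (DFTailSp A) A :=
  ProbabilityTheory.condDistrib (X 0) (dfPath X) P

lemma df_lim [StandardBorelSpace A] [Nonempty A] (hX : ∀ n, Measurable (X n)) (hexch : DFExch P X)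
    {f : A → ℝ} (hf : Measurable f) {C : ℝ} (hC : ∀ a, |f a| ≤ C) :
    ∀ᵐ ω ∂P, Tendsto (dfAvg fun n => f (X n ω)) atTop (nhds (∫ a, f a ∂(dfG P X (dfPath X ω)))) := by
  have hc := df_ae_conv hX hexch hf hC (P := P)
  set L : Ω → ℝ := fun ω => limUnder atTop (dfAvg fun n => f (X n ω)) with hL
  have hLlim : ∀ᵐ ω ∂P, Tendsto (dfAvg fun n => f (X n ω)) atTop (nhds (L ω)) := by
    filter_upwards [hc] with ω hω
    exact tendsto_nhds_limUnder hω
  have hpm := dfPath_measurable hX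
  have hLm : Measurable[MeasurableSpace.comap (dfPath X) inferInstance] L :=
    (df_limUnder_meas hf).comp (comap_measurable (dfPath X))
  obtain ⟨ω0⟩ := nonempty_of_isProbabilityMeasure P
  have hC0 : 0 ≤ C := (abs_nonneg _).trans (hC (X 0 ω0))
  have hLb : ∀ᵐ ω ∂P, |L ω| ≤ C := by
    filter_upwards [hLlim] with ω hω
    exact le_of_tendsto hω.abs (Eventually.of_forall fun N => dfAvg_abs_le hC0 (fun n => hC _) N)
  have hLi : Integrable L P :=
    Integrable.of_bound (hLm.mono hpm.comap_le le_rfl).aestronglyMeasurable C hLb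
  have hfi : Integrable (fun ω => f (X 0 ω)) P := df_int (hf.comp (hX 0)) (fun ω => hC _)
  have h1 : L =ᵐ[P] P[fun ω => f (X 0 ω) | MeasurableSpace.comap (dfPath X) inferInstance] := by
    refine ae_eq_condExp_of_forall_setIntegral_eq hpm.comap_le hfi (fun _ _ _ => hLi.integrableOn)
      (fun T hT _ => ?_) hLm.stronglyMeasurable.aestronglyMeasurable
    have hT0 : MeasurableSet T := hpm.comap_le T hT
    have hT1 : MeasurableSet[dfTail X] T := dfPath_measurable_tail.comap_le T hT
    have := df_step (P := P) hX hexch (H := T.indicator fun _ => (1 : ℝ))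
      ((@measurable_const ℝ Ω _ (dfTail X) 1).indicator hT1)
      ((integrable_const 1).indicator hT0) hf hC (g := fun _ _ => 1)
      (fun _ => measurable_const) (by simp) 0 hLlim
    simp only [Finset.range_zero, Finset.prod_empty, mul_one] at this
    rw [← integral_indicator hT0, ← integral_indicator hT0]
    have e : ∀ g : Ω → ℝ, T.indicator g = fun ω => T.indicator (fun _ => (1 : ℝ)) ω * g ω := by
      intro g
      funext ω
      by_cases h : ω ∈ T <;> simp [h]
    rw [e L, e (fun ω => f (X 0 ω))]
    exact this.symm
  have h2 := ProbabilityTheory.condExp_ae_eq_integral_condDistrib (μ := P) hpm (hX 0).aemeasurable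
    hf.stronglyMeasurable hfi
  filter_upwards [h1, h2, hLlim] with ω e1 e2 e3
  rw [e1, e2] at e3
  exact e3

/-- The limit property on indicator functions. -/
def DFLim (P : Measure Ω) (X : ℕ → Ω → A) (W : Ω → Measure A) : Prop :=
  ∀ s, MeasurableSet s → ∀ᵐ ω ∂P, Tendsto (dfAvg fun n => s.indicator (fun _ => (1 : ℝ)) (X n ω))
    atTop (nhds ((W ω).real s))

lemma df_real_meas {Ω' : Type*} (m : MeasurableSpace Ω') {W : Ω' → Measure A} (hW : Measurable W) {s : Set A}
    (hs : MeasurableSet s) : Measurable fun ω => (W ω).real s :=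
  ((Measure.measurable_coe hs).comp hW).ennreal_toReal

lemma df_prod_bound {W : Ω → Measure A} [∀ ω, IsProbabilityMeasure (W ω)] (s : ℕ → Set A) (m : ℕ)
    (ω : Ω) : |∏ j ∈ Finset.range m, (W ω).real (s j)| ≤ 1 := by
  rw [Finset.abs_prod]
  refine Finset.prod_le_one (fun _ _ => abs_nonneg _) fun j _ => ?_
  rw [abs_of_nonneg measureReal_nonneg]
  exact measureReal_le_one

lemma df_iid (hX : ∀ n, Measurable (X n)) (hexch : DFExch P X) {W : Ω → Measure A}
    [∀ ω, IsProbabilityMeasure (W ω)] (hW : Measurable[dfTail X] W) (hlim : DFLim P X W)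
    {s : ℕ → Set A} (hs : ∀ j, MeasurableSet (s j)) (m : ℕ) :
    ∀ {H : Ω → ℝ}, Measurable[dfTail X] H → Integrable H P →
    ∫ ω, H ω * ∏ j ∈ Finset.range m, (s j).indicator (fun _ => (1 : ℝ)) (X j ω) ∂P =
    ∫ ω, H ω * ∏ j ∈ Finset.range m, (W ω).real (s j) ∂P := by
  induction m with
  | zero => intro H _ _; simp
  | succ m ih =>
    intro H hH hHi
    have hind : ∀ (t : Set A) (a : A), |t.indicator (fun _ => (1 : ℝ)) a| ≤ 1 := by
      intro t a
      by_cases h : a ∈ t <;> simp [h]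
    have h1 := df_step (P := P) hX hexch hH hHi
      ((measurable_const (a := (1 : ℝ))).indicator (hs m)) (C := 1) (hind _)
      (g := fun j => (s j).indicator fun _ => (1 : ℝ))
      (fun j => (measurable_const (a := (1 : ℝ))).indicator (hs j))
      (fun j => hind _) m (hlim (s m) (hs m))
    have hWm := df_real_meas (dfTail X) hW (hs m)
    have h2 := ih (H := fun ω => H ω * (W ω).real (s m)) (hH.mul hWm)
      (hHi.mul_bdd (c := 1) (hWm.mono (dfTail_le hX) le_rfl).aestronglyMeasurable
        (ae_of_all _ fun ω => by
          rw [Real.norm_eq_abs, abs_of_nonneg measureReal_nonneg]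
          exact measureReal_le_one))
    simp only [Finset.prod_range_succ, ← mul_assoc]
    rw [h1]
    calc _ = _ := integral_congr_ae (ae_of_all _ fun ω => by ring)
      _ = _ := h2
      _ = _ := integral_congr_ae (ae_of_all _ fun ω => by ring)

lemma df_zero (hX : ∀ n, Measurable (X n)) {H : Ω → ℝ} (hHi : Integrable H P)
    (hH : Measurable[MeasurableSpace.comap (fun ω => fun n => X n ω) inferInstance] H)
    (h0 : ∀ (m : ℕ) (s : ℕ → Set A), (∀ j, MeasurableSet (s j)) →
      ∫ ω, H ω * ∏ j ∈ Finset.range m, (s j).indicator (fun _ => (1 : ℝ)) (X j ω) ∂P = 0) :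
    H =ᵐ[P] 0 := by
  classical
  have hXX : Measurable (fun ω => fun n => X n ω) := measurable_pi_lambda _ fun n => hX _
  have htot : ∫ ω, H ω ∂P = 0 := by simpa using h0 0 (fun _ => Set.univ) (fun _ => .univ)
  have key : ∀ B : Set (ℕ → A), MeasurableSet B →
      ∫ ω in (fun ω => fun n => X n ω) ⁻¹' B, H ω ∂P = 0 := by
    intro B hB
    induction B, hB using MeasurableSpace.induction_on_inter
      (generateFrom_squareCylinders (α := fun _ : ℕ => A)).symm
      (isPiSystem_squareCylinders (fun _ => MeasurableSpace.isPiSystem_measurableSet) (by simp)) with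
    | empty => simp
    | basic B hB =>
      obtain ⟨S, t, ht, rfl⟩ := hB
      have ht' : ∀ i, MeasurableSet (t i) := fun i => ht i (Set.mem_univ i)
      obtain ⟨m, hm⟩ := S.exists_nat_subset_range
      have := h0 m (fun j => if j ∈ S then t j else Set.univ) (fun j => by
        split_ifs
        exacts [ht' j, .univ])
      rw [← this, ← integral_indicator (hXX (MeasurableSet.pi S.countable_toSet fun i _ => ht' i))]
      refine integral_congr_ae (ae_of_all _ fun ω => ?_)
      simp only [Set.indicator_apply, Set.mem_preimage, Set.mem_pi]
      split_ifs with h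
      · rw [Finset.prod_eq_one, mul_one]
        intro j _
        rw [if_pos]
        split_ifs with hj
        · exact h j hj
        · trivial
      · push Not at h
        obtain ⟨i, hi, hi'⟩ := h
        have hi2 : i ∈ S := hi
        rw [Finset.prod_eq_zero (hm hi2), mul_zero]
        rw [if_pos hi2, if_neg hi']
    | compl t htm ih =>
      rw [Set.preimage_compl]
      have := integral_add_compl (hXX htm) hHi
      rw [ih, htot] at this
      linarith
    | iUnion f hd hfm ih =>
      rw [Set.preimage_iUnion]
      rw [integral_iUnion (fun i => hXX (hfm i))
        (fun i j hij => (hd hij).preimage _) hHi.integrableOn]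
      simp [ih]
  have h1 := ae_eq_condExp_of_forall_setIntegral_eq (μ := P) hXX.comap_le (f := fun _ => (0 : ℝ))
    (g := H) (integrable_const 0) (fun _ _ _ => hHi.integrableOn)
    (by
      rintro T ⟨B, hB, rfl⟩ _
      simpa using key B hB) hH.stronglyMeasurable.aestronglyMeasurable
  refine h1.trans ?_
  exact (condExp_zero).eventuallyEq

lemma df_tail (hX : ∀ n, Measurable (X n)) (hexch : DFExch P X) {W : Ω → Measure A}
    [∀ ω, IsProbabilityMeasure (W ω)] (hW : Measurable[dfTail X] W) (hlim : DFLim P X W)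
    {T : Set Ω} (hT : MeasurableSet[dfTail X] T) :
    ∃ t : Set Ω, MeasurableSet[MeasurableSpace.comap W inferInstance] t ∧
            P (symmDiff T t) = 0 := by
  have hle : MeasurableSpace.comap W inferInstance ≤ dfTail X := hW.comap_le
  have hle2 := dfTail_le hX
  have hle3 := hle.trans hle2
  have hT0 : MeasurableSet T := hle2 T hT
  set I : Ω → ℝ := T.indicator fun _ => (1 : ℝ) with hI
  set h : Ω → ℝ := P[I | MeasurableSpace.comap W inferInstance] with hh
  have hIi : Integrable I P := (integrable_const 1).indicator hT0
  have hIm : Measurable[dfTail X] I := (@measurable_const ℝ Ω _ (dfTail X) 1).indicator hT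
  have hhm : Measurable[MeasurableSpace.comap W inferInstance] h :=
    stronglyMeasurable_condExp.measurable
  have hhi : Integrable h P := integrable_condExp
  have hz : (fun ω => I ω - h ω) =ᵐ[P] 0 := by
    have hm : Measurable[dfTail X] fun ω => I ω - h ω := hIm.sub (hhm.mono hle le_rfl)
    refine df_zero hX (hIi.sub hhi) (hm.mono (iInf_le _ 0) le_rfl) fun m s hs => ?_
    rw [df_iid hX hexch hW hlim hs m hm (hIi.sub hhi)]
    set V : Ω → ℝ := fun ω => ∏ j ∈ Finset.range m, (W ω).real (s j) with hV
    have hVm : Measurable[MeasurableSpace.comap W inferInstance] V := by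
      refine Finset.measurable_fun_prod _ fun j _ => ?_
      exact df_real_meas _ (comap_measurable W) (hs j)
    have hVb : ∀ ω, ‖V ω‖ ≤ 1 := fun ω => df_prod_bound s m ω
    have hVm0 := (hVm.mono hle3 le_rfl).aestronglyMeasurable (μ := P)
    have hIV := hIi.mul_bdd (c := 1) hVm0 (ae_of_all _ hVb)
    have hhV := hhi.mul_bdd (c := 1) hVm0 (ae_of_all _ hVb)
    simp only [sub_mul]
    rw [integral_sub hIV hhV]
    have e := condExp_mul_of_stronglyMeasurable_right (μ := P) hVm.stronglyMeasurable hIV hIi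
    have e2 := integral_congr_ae e
    rw [integral_condExp hle3] at e2
    rw [sub_eq_zero]
    exact e2
  refine ⟨h ⁻¹' {1}, hhm (measurableSet_singleton 1), ?_⟩
  refine measure_mono_null ?_ hz
  intro ω hω
  simp only [Set.mem_symmDiff, Set.mem_preimage, Set.mem_singleton_iff] at hω
  intro hc
  have hc' : I ω = h ω := sub_eq_zero.1 hc
  rw [← hc'] at hω
  by_cases hωT : ω ∈ T <;> simp [hI, hωT] at hω
end

/-- de Finetti–Hewitt–Savage Theorem (strong form): if `A` is a compact metric space and
`(X_n)_n` is an exchangeable sequence of `A`-valued random variables, then the empirical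
distributions `W_N = N⁻¹ ∑_{n<N} δ_{X_n}` converge almost surely weakly-* to a random
probability measure `W` such that (i) `W` is a.s. a measurable function of `(X_n)_n`,
(ii) `W` generates the tail σ-algebra of `(X_n)_n` up to null sets, and (iii) the `X_n`
are conditionally i.i.d. with law `W` given `W`. -/
theorem deFinetti_Hewitt_Savage {Ω A : Type*} [MeasurableSpace Ω]
    [MetricSpace A] [CompactSpace A] [MeasurableSpace A] [BorelSpace A]
    (P : Measure Ω) [IsProbabilityMeasure P]
    (X : ℕ → Ω → A) (hX : ∀ n, Measurable (X n))
    (hexch : ∀ σ, FinitelySupported σ →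
      P.map (fun ω => fun n => X (σ n) ω) = P.map (fun ω => fun n => X n ω)) :
    ∃ W : Ω → Measure A,
      Measurable W ∧ (∀ ω, IsProbabilityMeasure (W ω)) ∧
      -- a.s. weak-* convergence of the empirical distributions to `W`
      (∀ᵐ ω ∂P, ∀ f : C(A, ℝ),
        Tendsto (fun N : ℕ => (N : ℝ)⁻¹ * ∑ n ∈ Finset.range N, f (X n ω)) atTop
          (nhds (∫ a, f a ∂(W ω)))) ∧
      -- (i) `W` is a.s. a function of the sequence `(X_n)_n`
      (∃ g : (ℕ → A) → Measure A, Measurable g ∧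
        ∀ᵐ ω ∂P, W ω = g (fun n => X n ω)) ∧
      -- (ii) `W` generates the tail σ-algebra up to `P`-null sets
      ((∀ s : Set Ω,
          MeasurableSet[⨅ N : ℕ, MeasurableSpace.comap (fun ω => fun n => X (n + N) ω)
            inferInstance] s →
          ∃ t : Set Ω, MeasurableSet[MeasurableSpace.comap W inferInstance] t ∧
            P (symmDiff s t) = 0) ∧
        (∀ t : Set Ω, MeasurableSet[MeasurableSpace.comap W inferInstance] t →
          ∃ s : Set Ω,
            MeasurableSet[⨅ N : ℕ, MeasurableSpace.comap (fun ω => fun n => X (n + N) ω)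
              inferInstance] s ∧ P (symmDiff s t) = 0)) ∧
      -- (iii) the `X_n` are conditionally i.i.d. with law `W` given `W`
      (∀ (m : ℕ) (s : Fin m → Set A), (∀ j, MeasurableSet (s j)) →
        ∀ t : Set (Measure A), MeasurableSet t →
          P ({ω | W ω ∈ t} ∩ {ω | ∀ j : Fin m, X j ω ∈ s j})
            = ∫⁻ ω in {ω | W ω ∈ t}, ∏ j : Fin m, W ω (s j) ∂P) := by
  classical
  have hexch' : DFExch P X := hexch
  obtain ⟨ω0⟩ := nonempty_of_isProbabilityMeasure P
  have : Nonempty A := ⟨X 0 ω0⟩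
  set W : Ω → Measure A := fun ω => dfG P X (dfPath X ω) with hWdef
  have hWt : Measurable[dfTail X] W := (dfG P X).measurable.comp dfPath_measurable_tail
  have hWm : Measurable W := hWt.mono (dfTail_le hX) le_rfl
  have hprob : ∀ ω, IsProbabilityMeasure (W ω) := fun ω => by
    simp only [hWdef, dfG]
    infer_instance
  have hlim : DFLim P X W := by
    intro s hs
    have := df_lim (P := P) hX hexch' (f := s.indicator fun _ => (1 : ℝ))
      (measurable_const.indicator hs) (C := 1)
      (fun a => by by_cases h : a ∈ s <;> simp [h])
    filter_upwards [this] with ω hω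
    have e : ∫ a, s.indicator (fun _ => (1 : ℝ)) a ∂(dfG P X (dfPath X ω)) = (W ω).real s := by
      rw [integral_indicator hs]
      simp [hWdef]
    rwa [e] at hω
  refine ⟨W, hWm, hprob, ?_, ?_, ⟨?_, ?_⟩, ?_⟩
  · have hd : ∀ᵐ ω ∂P, ∀ k, Tendsto (dfAvg fun n => TopologicalSpace.denseSeq C(A, ℝ) k (X n ω))
        atTop (nhds (∫ a, TopologicalSpace.denseSeq C(A, ℝ) k a ∂(W ω))) := by
      rw [ae_all_iff]
      intro k
      exact df_lim hX hexch' (ContinuousMap.continuous _).measurable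
        (C := ‖TopologicalSpace.denseSeq C(A, ℝ) k‖)
        (fun a => (TopologicalSpace.denseSeq C(A, ℝ) k).norm_coe_le_norm a)
    filter_upwards [hd] with ω hω f
    change Tendsto (dfAvg fun n => f (X n ω)) atTop _
    rw [Metric.tendsto_atTop]
    intro ε hε
    obtain ⟨k, hk⟩ := (TopologicalSpace.denseRange_denseSeq C(A, ℝ)).exists_dist_lt f
      (ε := ε / 3) (by positivity)
    obtain ⟨N0, hN0⟩ := Metric.tendsto_atTop.1 (hω k) (ε / 3) (by positivity)
    refine ⟨N0, fun N hN => ?_⟩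
    have h2 := hN0 N hN
    set φ := TopologicalSpace.denseSeq C(A, ℝ) k
    have hpt : ∀ a, |f a - φ a| ≤ ε / 3 := fun a =>
      (ContinuousMap.dist_apply_le_dist (f := f) (g := φ) a).trans hk.le
    have h1 : |dfAvg (fun n => f (X n ω)) N - dfAvg (fun n => φ (X n ω)) N| ≤ ε / 3 := by
      have := dfAvg_abs_le (C := ε / 3) (by positivity)
        (y := fun n => f (X n ω) - φ (X n ω)) (fun n => hpt _) N
      simpa only [dfAvg, Finset.sum_sub_distrib, mul_sub] using this
    have hint : ∀ g : C(A, ℝ), Integrable g (W ω) := fun g =>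
      Integrable.of_bound g.continuous.measurable.aestronglyMeasurable ‖g‖
        (ae_of_all _ fun a => ContinuousMap.norm_coe_le_norm _ a)
    have h3 : |∫ a, φ a ∂(W ω) - ∫ a, f a ∂(W ω)| ≤ ε / 3 := by
      rw [← integral_sub (hint φ) (hint f)]
      have := norm_integral_le_of_norm_le_const (μ := W ω) (C := ε / 3)
        (f := fun a => φ a - f a) (ae_of_all _ fun a => by
          rw [Real.norm_eq_abs, abs_sub_comm]; exact hpt a)
      simpa using this
    rw [Real.dist_eq] at h2 ⊢
    rw [abs_lt] at h2 ⊢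
    rw [abs_le] at h1 h3
    constructor <;> linarith [h1.1, h1.2, h2.1, h2.2, h3.1, h3.2]
  · exact ⟨fun x => dfG P X x, (dfG P X).measurable.comp df_id_measurable, ae_of_all _ fun ω => rfl⟩
  · intro s hs
    exact df_tail hX hexch' hWt hlim hs
  · intro t ht
    exact ⟨t, hWt.comap_le t ht, by simp⟩
  · intro m s hs t ht
    have hS : MeasurableSet {ω | W ω ∈ t} := hWm ht
    have hSt : MeasurableSet[dfTail X] {ω | W ω ∈ t} := hWt ht
    set S : Set Ω := {ω | W ω ∈ t} with hSdef
    set s' : ℕ → Set A := fun j => if h : j < m then s ⟨j, h⟩ else Set.univ with hs'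
    have hs'm : ∀ j, MeasurableSet (s' j) := by
      intro j
      simp only [hs']
      split_ifs
      exacts [hs _, .univ]
    have hs'f : ∀ j : Fin m, s' j = s j := fun j => by simp [hs']
    have key := df_iid (P := P) hX hexch' hWt hlim hs'm m
      (H := S.indicator fun _ => (1 : ℝ)) ((@measurable_const ℝ Ω _ (dfTail X) 1).indicator hSt)
      ((integrable_const 1).indicator hS)
    simp only [Finset.prod_range, hs'f] at key
    have hBm : MeasurableSet {ω | ∀ j : Fin m, X j ω ∈ s j} := by
      have : {ω | ∀ j : Fin m, X j ω ∈ s j} = ⋂ j : Fin m, X j ⁻¹' s j := by ext; simp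
      rw [this]
      exact MeasurableSet.iInter fun j => hX j (hs j)
    have e1 : ∫ ω, S.indicator (fun _ => (1 : ℝ)) ω *
        ∏ j : Fin m, (s j).indicator (fun _ => (1 : ℝ)) (X j ω) ∂P
        = P.real (S ∩ {ω | ∀ j : Fin m, X j ω ∈ s j}) := by
      rw [← integral_indicator_one (hS.inter hBm)]
      refine integral_congr_ae (ae_of_all _ fun ω => ?_)
      by_cases h1 : ω ∈ S
      · by_cases h2 : ∀ j : Fin m, X j ω ∈ s j
        · simp [h1, h2]
        · have h2' := h2
          push Not at h2
          obtain ⟨j, hj⟩ := h2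
          have : ω ∉ S ∩ {ω | ∀ j : Fin m, X j ω ∈ s j} := fun h => h2' h.2
          rw [Set.indicator_of_notMem this]
          simp only
          rw [Finset.prod_eq_zero (Finset.mem_univ j) (Set.indicator_of_notMem hj _), mul_zero]
      · simp [h1]
    have e2 : ∫ ω, S.indicator (fun _ => (1 : ℝ)) ω * ∏ j : Fin m, (W ω).real (s j) ∂P
        = ∫ ω in S, ∏ j : Fin m, (W ω).real (s j) ∂P := by
      rw [← integral_indicator hS]
      refine integral_congr_ae (ae_of_all _ fun ω => ?_)
      by_cases h1 : ω ∈ S <;> simp [h1]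
    have hpm : Measurable fun ω => ∏ j : Fin m, (W ω).real (s j) :=
      Finset.measurable_fun_prod _ fun j _ => df_real_meas _ hWm (hs j)
    have hpb : ∀ ω, |∏ j : Fin m, (W ω).real (s j)| ≤ 1 := by
      intro ω
      have := df_prod_bound (W := W) s' m ω
      simpa only [Finset.prod_range, hs'f] using this
    have e3 := ofReal_integral_eq_lintegral_ofReal
      (Integrable.integrableOn (s := S) (df_int (P := P) hpm hpb))
      (ae_of_all _ fun ω => Finset.prod_nonneg fun j _ => measureReal_nonneg)
    rw [← e2, ← key, e1, measureReal_def, ENNReal.ofReal_toReal (measure_ne_top _ _)] at e3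
    rw [e3]
    congr 1
    funext ω
    rw [ENNReal.ofReal_prod_of_nonneg fun j _ => measureReal_nonneg]
    refine Finset.prod_congr rfl fun j _ => ?_
    rw [measureReal_def, ENNReal.ofReal_toReal (measure_ne_top _ _)]
end

section
/- If (X_n)_n is an exchangeable sequence of random variables valued in a compact metric space A with de Finetti directing measure W (the a.s. limit of the empirical distributions), and Z is any random variable on the same space such that (Z, X_1, X_2, …) has the same law as (Z, X_{σ(1)}, X_{σ(2)}, …) for every finitely supported permutation σ, then Z is conditionally independent from (X_n)_n given W. -/
open MeasureTheory Filter

section Aux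

set_option linter.unusedSectionVars false

open MeasurableSpace Topology

variable {A : Type*} [MetricSpace A] [CompactSpace A] [MeasurableSpace A] [BorelSpace A]

/-- limit of empirical averages -/
noncomputable def avgL (f : C(A, ℝ)) (x : ℕ → A) : ℝ :=
  limUnder atTop (fun N : ℕ => (N : ℝ)⁻¹ * ∑ n ∈ Finset.range N, f (x n))

/-- coordinate swap -/
def swp (i j : ℕ) (x : ℕ → A) : ℕ → A := fun n => x (Equiv.swap i j n)

lemma measurable_swp (i j : ℕ) : Measurable (swp i j : (ℕ → A) → ℕ → A) := by
  unfold swp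
  exact measurable_pi_lambda _ fun n => measurable_pi_apply _

lemma avgL_swp (f : C(A, ℝ)) (i j : ℕ) (x : ℕ → A) : avgL f (swp i j x) = avgL f x := by
  unfold avgL limUnder
  congr 1
  apply Filter.map_congr
  filter_upwards [eventually_gt_atTop i, eventually_gt_atTop j] with N hi hj
  congr 1
  refine Finset.sum_equiv (Equiv.swap i j) (fun n => ?_) (fun n _ => rfl)
  simp only [Finset.mem_range, Equiv.swap_apply_def]
  split_ifs <;> omega

lemma measurable_avgL (f : C(A, ℝ)) : Measurable (avgL f) := by
  unfold avgL
  refine (StronglyMeasurable.limUnder fun N => ?_).measurable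
  refine Measurable.stronglyMeasurable ?_
  refine measurable_const.mul (Finset.measurable_sum _ fun n _ => ?_)
  exact f.continuous.measurable.comp (measurable_pi_apply n)

lemma measurableSet_tendsto_avgL (f : C(A, ℝ)) : MeasurableSet {x : ℕ → A |
    Tendsto (fun N : ℕ => (N : ℝ)⁻¹ * ∑ n ∈ Finset.range N, f (x n)) atTop (𝓝 (avgL f x))} := by
  have h : ∀ N : ℕ, Measurable fun x : ℕ → A =>
      (N : ℝ)⁻¹ * ∑ n ∈ Finset.range N, f (x n) := fun N =>
    measurable_const.mul (Finset.measurable_sum _ fun n _ =>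
      f.continuous.measurable.comp (measurable_pi_apply n))
  exact measurableSet_tendsto_fun h (measurable_avgL f)

lemma avg_bound (f : C(A, ℝ)) (x : ℕ → A) (N : ℕ) :
    ‖(N : ℝ)⁻¹ * ∑ n ∈ Finset.range N, f (x n)‖ ≤ ‖f‖ := by
  have h1 : ‖∑ n ∈ Finset.range N, f (x n)‖ ≤ N * ‖f‖ := by
    refine (norm_sum_le_of_le _ fun n _ => f.norm_coe_le_norm (x n)).trans ?_
    simp
  rw [norm_mul, norm_inv, Real.norm_natCast]
  rcases Nat.eq_zero_or_pos N with h | h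
  · subst h; simp
  · have : (0 : ℝ) < N := by exact_mod_cast h
    rw [inv_mul_le_iff₀ this]
    exact h1

/-- One-step replacement. -/
lemma step (ν : Measure (ℕ → A)) [IsFiniteMeasure ν]
    (hν : ∀ i j, ν.map (swp i j) = ν)
    (f : C(A, ℝ))
    (hlim : ∀ᵐ x ∂ν, Tendsto (fun N : ℕ => (N : ℝ)⁻¹ * ∑ n ∈ Finset.range N, f (x n)) atTop
      (𝓝 (avgL f x)))
    (φ : (ℕ → A) → ℝ) (hφ : Measurable φ) (C : ℝ) (hC : ∀ᵐ x ∂ν, ‖φ x‖ ≤ C) (j : ℕ)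
    (hinv : ∀ n, j ≤ n → ∀ x, φ (swp j n x) = φ x) :
    ∫ x, φ x * f (x j) ∂ν = ∫ x, φ x * avgL f x ∂ν := by
  have hfm : ∀ n, Measurable fun x : ℕ → A => f (x n) := fun n =>
    f.continuous.measurable.comp (measurable_pi_apply n)
  have hint : ∀ n, Integrable (fun x : ℕ → A => φ x * f (x n)) ν := by
    intro n
    refine Integrable.of_bound (hφ.mul (hfm n)).aestronglyMeasurable (C * ‖f‖) ?_
    filter_upwards [hC] with x hx
    rw [norm_mul]
    exact mul_le_mul hx (f.norm_coe_le_norm _) (norm_nonneg _) ((norm_nonneg _).trans hx)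
  have h1 : ∀ n, j ≤ n → ∫ x, φ x * f (x n) ∂ν = ∫ x, φ x * f (x j) ∂ν := by
    intro n hn
    conv_rhs => rw [← hν j n]
    rw [integral_map (measurable_swp j n).aemeasurable
      (by exact (hφ.mul (hfm j)).aestronglyMeasurable)]
    simp [hinv n hn, swp]
  have h2 : Tendsto (fun n => ∫ x, φ x * f (x n) ∂ν) atTop (𝓝 (∫ x, φ x * f (x j) ∂ν)) := by
    refine tendsto_const_nhds.congr' ?_
    filter_upwards [eventually_ge_atTop j] with n hn
    exact (h1 n hn).symm
  have h3 := h2.cesaro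
  have h4 : Tendsto (fun N : ℕ => ∫ x, φ x * ((N : ℝ)⁻¹ * ∑ n ∈ Finset.range N, f (x n)) ∂ν) atTop
      (𝓝 (∫ x, φ x * avgL f x ∂ν)) := by
    refine tendsto_integral_of_dominated_convergence (fun _ => C * ‖f‖) ?_
      (integrable_const _) ?_ ?_
    · intro N
      exact (hφ.mul (measurable_const.mul
        (Finset.measurable_sum _ fun n _ => hfm n))).aestronglyMeasurable
    · intro N
      filter_upwards [hC] with x hx
      rw [norm_mul]
      exact mul_le_mul hx (avg_bound f x N) (norm_nonneg _) ((norm_nonneg _).trans hx)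
    · filter_upwards [hlim] with x hx
      exact hx.const_mul _
  refine tendsto_nhds_unique h3 (h4.congr fun N => ?_)
  rw [← integral_finsetSum _ fun n _ => hint n, ← integral_const_mul]
  congr 1
  ext x
  rw [← Finset.mul_sum]
  ring

lemma prod_replace (ν : Measure (ℕ → A)) [IsFiniteMeasure ν]
    (hν : ∀ i j, ν.map (swp i j) = ν)
    (hlim : ∀ f : C(A, ℝ), ∀ᵐ x ∂ν,
      Tendsto (fun N : ℕ => (N : ℝ)⁻¹ * ∑ n ∈ Finset.range N, f (x n)) atTop
      (𝓝 (avgL f x)))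
    (f : ℕ → C(A, ℝ)) (k : ℕ) :
    ∀ (h : (ℕ → A) → ℝ) (_ : Measurable h) (C : ℝ) (_ : ∀ᵐ x ∂ν, ‖h x‖ ≤ C)
    (_ : ∀ i j x, h (swp i j x) = h x),
    ∫ x, (∏ i ∈ Finset.range k, f i (x i)) * h x ∂ν
      = ∫ x, (∏ i ∈ Finset.range k, avgL (f i) x) * h x ∂ν := by
  induction k with
  | zero => intros; simp
  | succ k ih =>
    intro h hh C hC hinv
    have hL : ∀ᵐ x ∂ν, ‖avgL (f k) x‖ ≤ ‖f k‖ := by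
      filter_upwards [hlim (f k)] with x hx
      exact le_of_tendsto hx.norm (Eventually.of_forall fun N => avg_bound (f k) x N)
    have e1 := step ν hν (f k) (hlim (f k)) (fun x => (∏ i ∈ Finset.range k, f i (x i)) * h x)
      ((Finset.measurable_prod _ fun i _ =>
        (f i).continuous.measurable.comp (measurable_pi_apply i)).mul hh)
      ((∏ i ∈ Finset.range k, ‖f i‖) * C) (by
        filter_upwards [hC] with x hx
        rw [norm_mul, norm_prod]
        refine mul_le_mul ?_ hx (norm_nonneg _) (Finset.prod_nonneg fun _ _ => norm_nonneg _)
        exact Finset.prod_le_prod (fun _ _ => norm_nonneg _)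
          fun i _ => (f i).norm_coe_le_norm _) k (by
        intro n hn x
        simp only [hinv]
        congr 1
        refine Finset.prod_congr rfl fun i hi => ?_
        rw [Finset.mem_range] at hi
        simp only [swp]
        rw [Equiv.swap_apply_of_ne_of_ne (by omega) (by omega)])
    have e2 := ih (fun x => avgL (f k) x * h x) ((measurable_avgL _).mul hh) (‖f k‖ * C) (by
        filter_upwards [hC, hL] with x hx hx'
        rw [norm_mul]
        exact mul_le_mul hx' hx (norm_nonneg _) (norm_nonneg _)) (by
        intro i j x
        simp only [hinv, avgL_swp])
    calc _ = ∫ x, (∏ i ∈ Finset.range k, f i (x i)) * h x * f k (x k) ∂ν := by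
          congr 1; ext x; rw [Finset.prod_range_succ]; ring
      _ = _ := e1
      _ = ∫ x, (∏ i ∈ Finset.range k, f i (x i)) * (avgL (f k) x * h x) ∂ν := by
          congr 1; ext x; ring
      _ = _ := e2
      _ = _ := by
          congr 1; ext x; rw [Finset.prod_range_succ]; ring

lemma exists_approx (K : Set A) (hK : IsClosed K) : ∃ g : ℕ → C(A, ℝ),
    (∀ n a, ‖g n a‖ ≤ 1) ∧
    (∀ a, Tendsto (fun n => g n a) atTop (𝓝 (K.indicator (fun _ => (1 : ℝ)) a))) := by
  refine ⟨fun n => ⟨fun a => (hK.apprSeq n a : ℝ), by fun_prop⟩, ?_, ?_⟩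
  · intro n a
    have := HasOuterApproxClosed.apprSeq_apply_le_one hK n a
    simp only [ContinuousMap.coe_mk, Real.norm_eq_abs, NNReal.abs_eq]
    exact_mod_cast this
  · intro a
    have := (tendsto_pi_nhds.1 (HasOuterApproxClosed.tendsto_apprSeq hK)) a
    have h2 := (NNReal.continuous_coe.tendsto _).comp this
    refine (h2.congr fun n => rfl).trans_eq ?_
    by_cases ha : a ∈ K <;> simp [ha]

lemma tendsto_approx {K : Set A} (hK : IsClosed K) {g : ℕ → C(A, ℝ)}
    (hg : ∀ n a, ‖g n a‖ ≤ 1)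
    (hg' : ∀ a, Tendsto (fun n => g n a) atTop (𝓝 (K.indicator (fun _ => (1 : ℝ)) a)))
    (μ : Measure A) [IsProbabilityMeasure μ] :
    Tendsto (fun n => ∫ a, g n a ∂μ) atTop (𝓝 (μ.real K)) := by
  have : μ.real K = ∫ a, K.indicator (fun _ => (1 : ℝ)) a ∂μ := by
    rw [integral_indicator hK.measurableSet]; simp
  rw [this]
  exact tendsto_integral_of_dominated_convergence (fun _ => 1)
    (fun n => (g n).continuous.measurable.aestronglyMeasurable) (integrable_const _)
    (fun n => Eventually.of_forall (hg n)) (Eventually.of_forall hg')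

/-- swap-invariant sets -/
@[reducible]
def invSpace (A : Type*) [MeasurableSpace A] : MeasurableSpace (ℕ → A) :=
  ⨅ p : ℕ × ℕ, invariants (fun (x : ℕ → A) n => x (Equiv.swap p.1 p.2 n))

lemma measurableSet_invSpace (B : Set (ℕ → A)) :
    MeasurableSet[invSpace A] B ↔ ∀ i j, MeasurableSet B ∧ swp i j ⁻¹' B = B := by
  unfold invSpace
  rw [MeasurableSpace.measurableSet_iInf]
  constructor
  · intro h i j; exact h (i, j)
  · intro h p; exact h p.1 p.2

variable {Ω : Type*} [MeasurableSpace Ω] (P : Measure Ω) [IsProbabilityMeasure P]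
    (X : ℕ → Ω → A)
    (W : Ω → Measure A) (hW_prob : ∀ ω, IsProbabilityMeasure (W ω))
    (hW_lim : ∀ᵐ ω ∂P, ∀ f : C(A, ℝ),
      Tendsto (fun N : ℕ => (N : ℝ)⁻¹ * ∑ n ∈ Finset.range N, f (X n ω)) atTop
        (nhds (∫ a, f a ∂(W ω))))

include hW_lim in
lemma avgL_eq (f : C(A, ℝ)) : ∀ᵐ ω ∂P, avgL f (fun n => X n ω) = ∫ a, f a ∂(W ω) := by
  filter_upwards [hW_lim] with ω h
  exact (h f).limUnder_eq

include hW_prob hW_lim in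
lemma exists_inv (G : Set Ω) (hG : MeasurableSet[MeasurableSpace.comap W inferInstance] G) :
    ∃ B : Set (ℕ → A), MeasurableSet B ∧ (∀ i j, swp i j ⁻¹' B = B) ∧
      G =ᵐ[P] (fun ω n => X n ω) ⁻¹' B := by
  have hav := avgL_eq P X W hW_lim
  let m : MeasurableSpace Ω := MeasurableSpace.comap (fun ω n => X n ω) (invSpace A)
  have h1 : ∀ f : C(A, ℝ), EventuallyMeasurable m (ae P) (fun ω => ∫ a, f a ∂(W ω)) := by
    intro f
    have h0 : Measurable[m] (fun ω => avgL f (fun n => X n ω)) := by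
      intro s hs
      refine ⟨avgL f ⁻¹' s, ?_, rfl⟩
      rw [measurableSet_invSpace]
      intro i j
      refine ⟨measurable_avgL f hs, ?_⟩
      ext x
      simp [avgL_swp]
    refine Measurable.eventuallyMeasurable_of_eventuallyEq (m := m) h0 ?_
    filter_upwards [hav f] with ω h
    exact h.symm
  have h2 : @Measurable _ _ (eventuallyMeasurableSpace m (ae P)) _ W := by
    refine @Measurable.measure_of_isPiSystem_of_isProbabilityMeasure _ _
      (eventuallyMeasurableSpace m (ae P)) _ W hW_prob {s : Set A | IsClosed s}
      ?_ isPiSystem_isClosed ?_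
    · rw [BorelSpace.measurable_eq (α := A), borel_eq_generateFrom_isClosed]
    · intro K hK
      obtain ⟨g, hg, hg'⟩ := exists_approx K hK
      have h3 : @Measurable _ _ (eventuallyMeasurableSpace m (ae P)) _
          (fun ω => (W ω).real K) := by
        refine @measurable_of_tendsto_metrizable _ _ (eventuallyMeasurableSpace m (ae P))
          _ _ _ _ (fun n ω => ∫ a, g n a ∂(W ω)) _ (fun n => h1 (g n)) ?_
        rw [tendsto_pi_nhds]
        intro ω
        have := hW_prob ω
        exact tendsto_approx hK hg hg' (W ω)
      have h4 : (fun ω => W ω K) = fun ω => ENNReal.ofReal ((W ω).real K) := by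
        ext ω
        have := hW_prob ω
        simp
      rw [h4]
      exact ENNReal.measurable_ofReal.comp h3
  obtain ⟨B', hB', rfl⟩ := hG
  obtain ⟨t, ⟨B, hB, rfl⟩, hG⟩ := h2 hB'
  rw [measurableSet_invSpace] at hB
  exact ⟨B, (hB 0 0).1, fun i j => (hB i j).2, hG⟩

lemma finitelySupported_swap (i j : ℕ) : FinitelySupported (Equiv.swap i j) := by
  refine Set.Finite.subset (Set.toFinite {i, j}) fun n hn => ?_
  by_contra h
  simp only [Set.mem_insert_iff, Set.mem_singleton_iff, not_or] at h
  exact hn (Equiv.swap_apply_of_ne_of_ne h.1 h.2)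

variable {E : Type*} [MeasurableSpace E] (hX : ∀ n, Measurable (X n))
    (Z : Ω → E) (hZ : Measurable Z)
    (hexch : ∀ σ, FinitelySupported σ →
      P.map (fun ω => (Z ω, fun n => X (σ n) ω))
        = P.map (fun ω => (Z ω, fun n => X n ω)))

include hX hZ hexch in
lemma map_exch (S : Set E) (hS : MeasurableSet S) (i j : ℕ) :
    ((P.restrict (Z ⁻¹' S)).map (fun ω n => X n ω)).map (swp i j)
      = (P.restrict (Z ⁻¹' S)).map (fun ω n => X n ω) := by
  have hXm : Measurable (fun ω n => X n ω) := measurable_pi_lambda _ hX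
  ext C hC
  rw [Measure.map_apply (measurable_swp i j) hC,
    Measure.map_apply hXm (measurable_swp i j hC), Measure.map_apply hXm hC,
    Measure.restrict_apply (hXm (measurable_swp i j hC)), Measure.restrict_apply (hXm hC)]
  have h := congrArg (fun μ => μ (S ×ˢ C)) (hexch _ (finitelySupported_swap i j))
  rw [Measure.map_apply (hZ.prodMk (measurable_pi_lambda _ fun n => hX _)) (hS.prod hC),
    Measure.map_apply (hZ.prodMk hXm) (hS.prod hC)] at h
  rw [Set.inter_comm, Set.inter_comm _ (Z ⁻¹' S)]
  exact h

include hX hZ hexch hW_lim hW_prob in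
lemma key_cont (S : Set E) (hS : MeasurableSet S) (G : Set Ω)
    (hG : MeasurableSet[MeasurableSpace.comap W inferInstance] G) (hGm : MeasurableSet G)
    (f : ℕ → C(A, ℝ)) (k : ℕ) :
    ∫ ω in G ∩ Z ⁻¹' S, (∏ i ∈ Finset.range k, f i (X i ω)) ∂P
      = ∫ ω in G ∩ Z ⁻¹' S, (∏ i ∈ Finset.range k, ∫ a, f i a ∂(W ω)) ∂P := by
  have hXm : Measurable (fun ω n => X n ω) := measurable_pi_lambda _ hX
  obtain ⟨B, hB, hBinv, hGB⟩ := exists_inv P X W hW_prob hW_lim G hG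
  have hlimX : ∀ f : C(A, ℝ), ∀ᵐ ω ∂P,
      Tendsto (fun N : ℕ => (N : ℝ)⁻¹ * ∑ n ∈ Finset.range N, f (X n ω)) atTop
      (𝓝 (avgL f (fun n => X n ω))) := by
    intro f
    filter_upwards [hW_lim, avgL_eq P X W hW_lim f] with ω h1 h2
    rw [h2]; exact h1 f
  have hmain := prod_replace ((P.restrict (Z ⁻¹' S)).map (fun ω n => X n ω))
    (map_exch P X hX Z hZ hexch S hS) (by
      intro f
      rw [ae_map_iff hXm.aemeasurable]
      · exact ae_restrict_of_ae (hlimX f)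
      · exact measurableSet_tendsto_avgL f) f k (B.indicator fun _ => 1)
    (measurable_const.indicator hB) 1
    (Eventually.of_forall fun x => by
      by_cases hx : x ∈ B <;> simp [hx]) (by
      intro i j x
      have : (swp i j x ∈ B) ↔ x ∈ B := by
        conv_rhs => rw [← hBinv i j]
        rfl
      by_cases hx : x ∈ B <;> simp [hx, this])
  have hm1 : Measurable fun x : ℕ → A => ∏ i ∈ Finset.range k, f i (x i) :=
    Finset.measurable_prod _ fun i _ =>
        (f i).continuous.measurable.comp (measurable_pi_apply i)
  have hm2 : Measurable fun x : ℕ → A => ∏ i ∈ Finset.range k, avgL (f i) x :=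
    Finset.measurable_prod _ fun i _ => measurable_avgL _
  have hi : Measurable (B.indicator fun _ => (1 : ℝ)) := measurable_const.indicator hB
  rw [integral_map hXm.aemeasurable (by exact (hm1.mul hi).aestronglyMeasurable),
    integral_map hXm.aemeasurable (by exact (hm2.mul hi).aestronglyMeasurable)] at hmain
  have hGi : ∀ᵐ ω ∂(P.restrict (Z ⁻¹' S)), (B.indicator (fun _ => (1 : ℝ)) fun n => X n ω)
      = G.indicator (fun _ => (1 : ℝ)) ω := by
    refine ae_restrict_of_ae ?_
    filter_upwards [hGB] with ω h
    have h' : ω ∈ G ↔ (fun n => X n ω) ∈ B := Iff.of_eq h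
    by_cases hx : ω ∈ G
    · simp [hx, h'.1 hx]
    · simpa [hx] using fun h0 => hx (h'.2 h0)
  have hLi : ∀ᵐ ω ∂(P.restrict (Z ⁻¹' S)), ∀ i, avgL (f i) (fun n => X n ω)
      = ∫ a, f i a ∂(W ω) :=
    ae_restrict_of_ae (ae_all_iff.2 fun i => avgL_eq P X W hW_lim (f i))
  rw [← Measure.restrict_restrict hGm, ← integral_indicator hGm, ← integral_indicator hGm]
  refine Eq.trans (integral_congr_ae ?_) (hmain.trans (integral_congr_ae ?_))
  · filter_upwards [hGi] with ω h
    rw [h]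
    by_cases hx : ω ∈ G <;> simp [hx]
  · filter_upwards [hGi, hLi] with ω h h2
    rw [h]
    by_cases hx : ω ∈ G <;> simp [hx, h2]

include hX hZ hexch hW_lim hW_prob in
lemma key_closed (hW : Measurable W) (S : Set E) (hS : MeasurableSet S) (G : Set Ω)
    (hG : MeasurableSet[MeasurableSpace.comap W inferInstance] G)
    (K : ℕ → Set A) (hK : ∀ i, IsClosed (K i)) (k : ℕ) :
    ∫ ω in G ∩ Z ⁻¹' S, (∏ i ∈ Finset.range k, (K i).indicator (fun _ => (1 : ℝ)) (X i ω)) ∂P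
      = ∫ ω in G ∩ Z ⁻¹' S, (∏ i ∈ Finset.range k, (W ω).real (K i)) ∂P := by
  choose g hg hg' using fun i => exists_approx (K i) (hK i)
  have h1 : Tendsto (fun n => ∫ ω in G ∩ Z ⁻¹' S, (∏ i ∈ Finset.range k, g i n (X i ω)) ∂P) atTop
      (𝓝 (∫ ω in G ∩ Z ⁻¹' S,
        (∏ i ∈ Finset.range k, (K i).indicator (fun _ => (1 : ℝ)) (X i ω)) ∂P)) := by
    refine tendsto_integral_of_dominated_convergence (fun _ => 1) ?_ (integrable_const _) ?_ ?_
    · intro n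
      exact (Finset.measurable_prod _ fun i _ =>
        (g i n).continuous.measurable.comp (hX i)).aestronglyMeasurable
    · intro n
      refine Eventually.of_forall fun ω => ?_
      rw [norm_prod]
      exact Finset.prod_le_one (fun _ _ => norm_nonneg _) fun i _ => hg i n _
    · refine Eventually.of_forall fun ω => ?_
      exact tendsto_finsetProd _ fun i _ => hg' i _
  have h2 : Tendsto (fun n => ∫ ω in G ∩ Z ⁻¹' S,
      (∏ i ∈ Finset.range k, ∫ a, g i n a ∂(W ω)) ∂P) atTop
      (𝓝 (∫ ω in G ∩ Z ⁻¹' S, (∏ i ∈ Finset.range k, (W ω).real (K i)) ∂P)) := by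
    refine tendsto_integral_of_dominated_convergence (fun _ => 1) ?_ (integrable_const _) ?_ ?_
    · intro n
      refine AEStronglyMeasurable.restrict ?_
      have : Measurable fun ω =>
          ∏ i ∈ Finset.range k, avgL (g i n) (fun n => X n ω) :=
        Finset.measurable_prod _ fun i _ =>
          (measurable_avgL (g i n)).comp (measurable_pi_lambda _ hX)
      refine this.aestronglyMeasurable.congr ?_
      filter_upwards [ae_all_iff.2 fun i => avgL_eq P X W hW_lim (g i n)] with ω h
      simp [h]
    · intro n
      refine Eventually.of_forall fun ω => ?_
      have := hW_prob ω
      rw [norm_prod]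
      refine Finset.prod_le_one (fun _ _ => norm_nonneg _) fun i _ => ?_
      refine (norm_integral_le_of_norm_le_const (C := 1) (Eventually.of_forall (hg i n))).trans ?_
      simp
    · refine Eventually.of_forall fun ω => ?_
      have := hW_prob ω
      exact tendsto_finsetProd _ fun i _ => tendsto_approx (hK i) (hg i) (hg' i) (W ω)
  refine tendsto_nhds_unique h1 (h2.congr fun n => ?_)
  exact (key_cont P X W hW_prob hW_lim hX Z hZ hexch S hS G hG (hW.comap_le _ hG)
    (fun i => g i n) k).symm

/-- closed finite boxes -/
def boxes (A : Type*) [TopologicalSpace A] : Set (Set (ℕ → A)) :=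
  {B | ∃ K : ℕ → Set A, (∀ i, IsClosed (K i)) ∧ ∃ k, B = {x | ∀ i < k, x i ∈ K i}}

lemma isPiSystem_boxes (A : Type*) [TopologicalSpace A] : IsPiSystem (boxes A) := by
  classical
  rintro _ ⟨K, hK, k, rfl⟩ _ ⟨K', hK', k', rfl⟩ -
  refine ⟨fun i => (if i < k then K i else Set.univ) ∩ (if i < k' then K' i else Set.univ),
    fun i => ?_, max k k', ?_⟩
  · refine IsClosed.inter ?_ ?_
    · split_ifs
      · exact hK i
      · exact isClosed_univ
    · split_ifs
      · exact hK' i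
      · exact isClosed_univ
  · ext x
    simp only [Set.mem_inter_iff, Set.mem_ofPred_eq]
    constructor
    · rintro ⟨h1, h2⟩ i -
      constructor
      · split_ifs with h
        · exact h1 i h
        · trivial
      · split_ifs with h
        · exact h2 i h
        · trivial
    · intro h
      constructor
      · intro i hi
        have := (h i (lt_max_of_lt_left hi)).1
        rwa [if_pos hi] at this
      · intro i hi
        have := (h i (lt_max_of_lt_right hi)).2
        rwa [if_pos hi] at this

lemma measurableSet_boxes {A : Type*} [TopologicalSpace A] [MeasurableSpace A] [BorelSpace A]
    {B : Set (ℕ → A)} (hB : B ∈ boxes A) : MeasurableSet B := by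
  obtain ⟨K, hK, k, rfl⟩ := hB
  have : {x : ℕ → A | ∀ i < k, x i ∈ K i} = ⋂ i, ⋂ _ : i < k, (fun x => x i) ⁻¹' K i := by
    ext x; simp
  rw [this]
  exact MeasurableSet.iInter fun i => MeasurableSet.iInter fun _ =>
    measurable_pi_apply i (hK i).measurableSet

lemma generateFrom_boxes (A : Type*) [TopologicalSpace A] [MeasurableSpace A] [BorelSpace A] :
    (MeasurableSpace.pi : MeasurableSpace (ℕ → A)) = generateFrom (boxes A) := by
  classical
  refine le_antisymm ?_ (generateFrom_le fun B hB => measurableSet_boxes hB)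
  refine iSup_le fun i => ?_
  rw [← measurable_iff_comap_le]
  refine @measurable_of_isClosed _ _ _ _ _ (generateFrom (boxes A)) _ fun K hK => ?_
  refine measurableSet_generateFrom ⟨fun j => if j = i then K else Set.univ, fun j => ?_, i + 1, ?_⟩
  · dsimp only
    split_ifs
    · exact hK
    · exact isClosed_univ
  · ext x
    simp only [Set.mem_preimage, Set.mem_ofPred_eq]
    constructor
    · intro h j _
      split_ifs with hj
      · rw [hj]; exact h
      · trivial
    · intro h
      simpa using h i (Nat.lt_succ_self i)

end Aux

/-- If `(X_n)_n` is an exchangeable sequence valued in a compact metric space `A` with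
de Finetti directing measure `W` (the a.s. weak-* limit of the empirical distributions), and
`Z` is any random variable such that `(Z, (X_n)_n)` is jointly invariant under finitely
supported permutations of the index `n`, then `Z` is conditionally independent from `(X_n)_n`
given `W`. -/
theorem condIndep_of_joint_exchangeable {Ω A E : Type*}
    [MeasurableSpace Ω] [StandardBorelSpace Ω] [Nonempty Ω]
    [MetricSpace A] [CompactSpace A] [MeasurableSpace A] [BorelSpace A]
    [MeasurableSpace E]
    (P : Measure Ω) [IsProbabilityMeasure P]
    (X : ℕ → Ω → A) (hX : ∀ n, Measurable (X n))
    (Z : Ω → E) (hZ : Measurable Z)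
    (W : Ω → Measure A) (hW : Measurable W)
    (hW_prob : ∀ ω, IsProbabilityMeasure (W ω))
    (hW_lim : ∀ᵐ ω ∂P, ∀ f : C(A, ℝ),
      Tendsto (fun N : ℕ => (N : ℝ)⁻¹ * ∑ n ∈ Finset.range N, f (X n ω)) atTop
        (nhds (∫ a, f a ∂(W ω))))
    (hexch : ∀ σ, FinitelySupported σ →
      P.map (fun ω => (Z ω, fun n => X (σ n) ω))
        = P.map (fun ω => (Z ω, fun n => X n ω))) :
    ProbabilityTheory.CondIndepFun (MeasurableSpace.comap W inferInstance) hW.comap_le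
      Z (fun ω => fun n => X n ω) P := by
  have hXm : Measurable (fun ω n => X n ω) := measurable_pi_lambda _ hX
  rw [ProbabilityTheory.condIndepFun_iff_condIndep]
  have hle := hW.comap_le
  refine ProbabilityTheory.CondIndepSets.condIndep
    (p1 := {s | MeasurableSet[MeasurableSpace.comap Z inferInstance] s})
    (p2 := Set.image (Set.preimage fun ω n => X n ω) (boxes A))
    hZ.comap_le hXm.comap_le (@MeasurableSpace.isPiSystem_measurableSet _ (_)) ?_
    (@MeasurableSpace.generateFrom_measurableSet _ (_)).symm ?_ ?_
  · have := (isPiSystem_boxes A).comap (fun ω n => X n ω)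
    exact this
  · rw [generateFrom_boxes A, MeasurableSpace.comap_generateFrom]
  rw [ProbabilityTheory.condIndepSets_iff]
  rotate_left
  · exact fun s hs => hZ.comap_le _ hs
  · rintro _ ⟨B, hB, rfl⟩
    exact hXm (measurableSet_boxes hB)
  rintro _ _ ⟨S, hS, rfl⟩ ⟨B, hB, rfl⟩
  have hBm := hXm (measurableSet_boxes hB)
  obtain ⟨K, hK, k, rfl⟩ := hB
  set T : Set Ω := (fun ω n => X n ω) ⁻¹' {x | ∀ i < k, x i ∈ K i} with hT
  let V : Ω → ℝ := fun ω => ∏ i ∈ Finset.range k, (W ω).real (K i)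
  have hVm : Measurable[(MeasurableSpace.comap W inferInstance)] V := by
    have h0 : Measurable fun μ : Measure A => ∏ i ∈ Finset.range k, μ.real (K i) :=
      Finset.measurable_prod _ fun i _ =>
        (Measure.measurable_coe (hK i).measurableSet).ennreal_toReal
    exact h0.comp (comap_measurable W)
  have hVb : ∀ ω, ‖V ω‖ ≤ 1 := by
    intro ω
    have := hW_prob ω
    rw [norm_prod]
    refine Finset.prod_le_one (fun _ _ => norm_nonneg _) fun i _ => ?_
    rw [Real.norm_of_nonneg measureReal_nonneg]
    exact measureReal_le_one
  have hVi : Integrable V P :=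
    Integrable.of_bound (hVm.mono hle le_rfl).aestronglyMeasurable 1 (Eventually.of_forall hVb)
  have hTp : ∀ ω, (∏ i ∈ Finset.range k, (K i).indicator (fun _ => (1 : ℝ)) (X i ω))
      = T.indicator (fun _ => (1 : ℝ)) ω := by
    intro ω
    by_cases h : ω ∈ T
    · rw [Set.indicator_of_mem h]
      refine Finset.prod_eq_one fun i hi => ?_
      exact Set.indicator_of_mem (h i (Finset.mem_range.1 hi)) _
    · rw [Set.indicator_of_notMem h]
      have h' : ∃ i, i < k ∧ X i ω ∉ K i := by
        by_contra h0
        push Not at h0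
        exact h h0
      obtain ⟨i, hi, hi'⟩ := h'
      exact Finset.prod_eq_zero (Finset.mem_range.2 hi) (Set.indicator_of_notMem hi' _)
  have key : ∀ S : Set E, MeasurableSet S → ∀ G, MeasurableSet[(MeasurableSpace.comap W inferInstance)] G →
      ∫ ω in G, (Z ⁻¹' S).indicator V ω ∂P
        = ∫ ω in G, (Z ⁻¹' S ∩ T).indicator (fun _ => (1 : ℝ)) ω ∂P := by
    intro S hS G hG
    have h := key_closed P X W hW_prob hW_lim hX Z hZ hexch hW S hS G hG K hK k
    simp only [hTp] at h
    rw [setIntegral_indicator (hZ hS), ← Set.indicator_indicator, setIntegral_indicator (hZ hS)]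
    exact h.symm
  have hcond : ∀ S : Set E, MeasurableSet S →
      P[(Z ⁻¹' S ∩ T).indicator (fun _ => (1 : ℝ)) | (MeasurableSpace.comap W inferInstance)] =ᵐ[P] V * P[(Z ⁻¹' S).indicator (fun _ => (1 : ℝ)) | (MeasurableSpace.comap W inferInstance)] := by
    intro S hS
    have hi : Integrable ((Z ⁻¹' S).indicator fun _ => (1 : ℝ)) P :=
      (integrable_const _).indicator (hZ hS)
    have e : V * (Z ⁻¹' S).indicator (fun _ => (1 : ℝ)) = (Z ⁻¹' S).indicator V := by
      ext ω
      by_cases h : ω ∈ Z ⁻¹' S <;> simp [h]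
    have h1 := condExp_stronglyMeasurable_mul_of_bound hle hVm.stronglyMeasurable hi 1
      (Eventually.of_forall hVb)
    rw [e] at h1
    refine EventuallyEq.trans ?_ h1
    refine EventuallyEq.symm ?_
    refine ae_eq_condExp_of_forall_setIntegral_eq hle
      ((integrable_const _).indicator ((hZ hS).inter hBm))
      (fun s _ _ => integrable_condExp.integrableOn) (fun s hs _ => ?_)
      stronglyMeasurable_condExp.aestronglyMeasurable
    rw [setIntegral_condExp hle (hVi.indicator (hZ hS)) hs]
    exact key S hS s hs
  have hT' : P[T.indicator (fun _ => (1 : ℝ)) | (MeasurableSpace.comap W inferInstance)] =ᵐ[P] V := by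
    have h := hcond Set.univ MeasurableSet.univ
    simp only [Set.preimage_univ, Set.univ_inter, Set.indicator_univ] at h
    refine h.trans ?_
    rw [condExp_const hle]
    exact Eventually.of_forall fun ω => by simp
  filter_upwards [hcond S hS, hT'] with ω h1 h2
  rw [h1, Pi.mul_apply, Pi.mul_apply, h2, mul_comm]
end

section
/- Corollary (factorization of skew-product maps): let U = (U_e)_{e⊆[k]} and V = (V_e)_{e⊆[k]} be independent uniform random variables in [0,1)^{P[k]}. If G : [0,1)^{P[k]} → [0,1)^{P[k]} is a function of skew-product type whose skew-product tuple is Lebesgue-measure-preserving, then there is a function H : ([0,1)×[0,1))^{P[k]} → [0,1)^{P[k]} of skew-product type, with Lebesgue-measure-preserving skew-product tuple, such that G(H(U,V)) = U almost surely. -/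
open MeasureTheory

/-- The uniform probability measure on `[0,1) ⊆ ℝ`. -/
noncomputable def unif01 : Measure ℝ := volume.restrict (Set.Ico (0:ℝ) 1)

/-- The function of skew-product type `f̂` associated to a skew-product tuple
`f_i : C^{P[i]} → D`: the coordinate of `f̂(x)` at `e ⊆ [k]` is `f_{|e|}` applied to the
coordinates of `x` indexed by subsets of `e`, reindexed along `Fin e.card ≃o e`. -/
def hatC {C D : Type*} {k : ℕ} (f : ∀ i : ℕ, (Finset (Fin i) → C) → D)
    (x : Finset (Fin k) → C) (e : Finset (Fin k)) : D :=
  f e.card (fun a => x (a.map (e.orderEmbOfFin rfl).toEmbedding))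

/-- A skew-product tuple is middle-symmetric if each `f_i` is invariant under the simultaneous
action of any permutation of `[i]` on the coordinate indices. -/
def MidSymC {C D : Type*} (f : ∀ i : ℕ, (Finset (Fin i) → C) → D) : Prop :=
  ∀ (i : ℕ) (σ : Equiv.Perm (Fin i)) (x : Finset (Fin i) → C),
    f i (fun a => x (a.map σ.toEmbedding)) = f i x

/-- A skew-product tuple is measure-preserving (from `μC` to `μD`) if for each `i` and each
fixed assignment on the proper subsets of `[i]`, the map of the top coordinate `u ↦ f_i(x, u)`
pushes `μC` forward to `μD`. -/
def IsMPTuple {C D : Type*} [MeasurableSpace C] [MeasurableSpace D]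
    (μC : Measure C) (μD : Measure D) (f : ∀ i : ℕ, (Finset (Fin i) → C) → D) : Prop :=
  ∀ (i : ℕ) (x : Finset (Fin i) → C),
    μC.map (fun u => f i (Function.update x Finset.univ u)) = μD

open ProbabilityTheory

instance instUnif01Prob : IsProbabilityMeasure unif01 := by
  constructor
  simp [unif01]

lemma unif01_map_proj :
    unif01.map (Set.projIcc (0:ℝ) 1 zero_le_one) = (volume : Measure unitInterval) := by
  have h1 : (volume : Measure unitInterval).map (Subtype.val) = unif01 := by
    rw [unif01, Measure.restrict_congr_set Ico_ae_eq_Icc]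
    exact map_comap_subtype_coe measurableSet_Icc _
  rw [← h1, Measure.map_map continuous_projIcc.measurable measurable_subtype_coe]
  have : (Set.projIcc (0:ℝ) 1 zero_le_one) ∘ (Subtype.val : unitInterval → ℝ) = id := by
    funext x
    exact Set.projIcc_val zero_le_one x
  rw [this, Measure.map_id]

/-- Orbits of the permutation action on coordinate indices. -/
def permSetoid (i : ℕ) : Setoid (Finset (Fin i) → ℝ) where
  r x y := ∃ σ : Equiv.Perm (Fin i), y = fun a => x (a.map σ.toEmbedding)
  iseqv := by
    refine ⟨fun x => ⟨Equiv.refl _, ?_⟩, ?_, ?_⟩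
    · funext a
      have : a.map (Equiv.refl (Fin i)).toEmbedding = a := by
        ext b
        simp
      rw [this]
    · rintro x y ⟨σ, rfl⟩
      refine ⟨σ.symm, ?_⟩
      funext a
      have : (a.map σ.symm.toEmbedding).map σ.toEmbedding = a := by
        ext b
        simp
      simp only [this]
    · rintro x y z ⟨σ, rfl⟩ ⟨τ, rfl⟩
      refine ⟨τ.trans σ, ?_⟩
      funext a
      simp only [Finset.map_map]
      rfl

lemma exists_step {i : ℕ} (G : (Finset (Fin i) → ℝ) → ℝ) (hG : Measurable G)
    (hsym : ∀ (σ : Equiv.Perm (Fin i)) (x : Finset (Fin i) → ℝ),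
      G (fun a => x (a.map σ.toEmbedding)) = G x)
    (hmp : ∀ x : Finset (Fin i) → ℝ,
      unif01.map (fun u => G (Function.update x Finset.univ u)) = unif01) :
    ∃ Q : (Finset (Fin i) → ℝ) → ℝ × ℝ → ℝ, Measurable (Function.uncurry Q) ∧
      (∀ (σ : Equiv.Perm (Fin i)) (y : Finset (Fin i) → ℝ) (p : ℝ × ℝ),
        Q (fun a => y (a.map σ.toEmbedding)) p = Q y p) ∧
      (∀ y, (unif01.prod unif01).map (Q y) = unif01) ∧
      ∀ y, ∀ᵐ p ∂(unif01.prod unif01), G (Function.update y Finset.univ (Q y p)) = p.1 := by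
  have hupd : Measurable (fun z : (Finset (Fin i) → ℝ) × ℝ =>
      Function.update z.1 Finset.univ z.2) := by
    refine measurable_pi_lambda _ fun a => ?_
    by_cases ha : a = Finset.univ
    · subst ha
      simpa using measurable_snd
    · simp only [Function.update_of_ne ha]
      exact (measurable_pi_apply a).comp measurable_fst
  have hF : Measurable (fun z : (Finset (Fin i) → ℝ) × ℝ =>
      (G (Function.update z.1 Finset.univ z.2), z.2)) :=
    (hG.comp hupd).prodMk measurable_snd
  have hFx : ∀ x : Finset (Fin i) → ℝ, Measurable
      (fun w : ℝ => (G (Function.update x Finset.univ w), w)) := fun x =>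
    hF.comp measurable_prodMk_left
  let m : (Finset (Fin i) → ℝ) → Measure (ℝ × ℝ) := fun x =>
    unif01.map (fun w => (G (Function.update x Finset.univ w), w))
  have hm : Measurable m := by
    refine Measure.measurable_of_measurable_coe _ fun s hs => ?_
    have : (fun x => m x s) = fun x => unif01 (Prod.mk x ⁻¹'
        ((fun z : (Finset (Fin i) → ℝ) × ℝ =>
          (G (Function.update z.1 Finset.univ z.2), z.2)) ⁻¹' s)) := by
      funext x
      rw [Measure.map_apply (hFx x) hs]
      rfl
    rw [this]
    exact measurable_measure_prodMk_left (hF hs)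
  have hlift : ∀ x y : Finset (Fin i) → ℝ, (permSetoid i).r x y → m x = m y := by
    rintro x y ⟨σ, rfl⟩
    have : ∀ w, Function.update (fun a : Finset (Fin i) => x (a.map σ.toEmbedding)) Finset.univ w
        = fun a => Function.update x Finset.univ w (a.map σ.toEmbedding) := by
      intro w
      funext a
      have : a.map σ.toEmbedding = Finset.univ ↔ a = Finset.univ := by
        rw [← Finset.map_univ_equiv σ, Finset.map_inj, Finset.map_univ_equiv σ]
      simp only [Function.update_apply, this]
    simp only [m, this, hsym]
  let κ : Kernel (Quotient (permSetoid i)) (ℝ × ℝ) :=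
    { toFun := Quotient.lift m hlift
      measurable' := measurable_from_quotient.2 hm }
  have hκ : ∀ x, κ (Quotient.mk (permSetoid i) x) = m x := fun x => rfl
  have : IsMarkovKernel κ := by
    refine ⟨fun a => ?_⟩
    induction a using Quotient.inductionOn with
    | h x =>
      rw [hκ]
      exact Measure.isProbabilityMeasure_map (hFx x).aemeasurable
  have hfst : ∀ x, Kernel.fst κ (Quotient.mk (permSetoid i) x) = unif01 := by
    intro x
    rw [Kernel.fst_apply, hκ, Measure.map_map measurable_fst (hFx x)]
    exact hmp x
  obtain ⟨q, hq, hqm⟩ := Kernel.exists_measurable_map_eq_unitInterval (Kernel.condKernel κ)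
  let Q : (Finset (Fin i) → ℝ) → ℝ × ℝ → ℝ := fun y p =>
    q (Quotient.mk (permSetoid i) y, p.1) (Set.projIcc (0:ℝ) 1 zero_le_one p.2)
  have hQ : Measurable (Function.uncurry Q) := by
    have : Measurable (fun z : (Finset (Fin i) → ℝ) × (ℝ × ℝ) =>
        ((Quotient.mk (permSetoid i) z.1, z.2.1), Set.projIcc (0:ℝ) 1 zero_le_one z.2.2)) := by
      refine Measurable.prodMk (Measurable.prodMk ?_ ?_) ?_
      · exact measurable_quotient_mk''.comp measurable_fst
      · exact measurable_fst.comp measurable_snd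
      · exact continuous_projIcc.measurable.comp (measurable_snd.comp measurable_snd)
    exact hq.comp this
  have hQy : ∀ y, Measurable (Q y) := fun y => hQ.comp measurable_prodMk_left
  have key : ∀ y, (unif01.prod unif01).map (fun p => (p.1, Q y p)) = m y := by
    intro y
    have hme : Measurable (fun p : ℝ × ℝ => (p.1, Q y p)) := measurable_fst.prodMk (hQy y)
    ext s hs
    have e1 : m y s = (κ.fst.compProd κ.condKernel) (Quotient.mk (permSetoid i) y) s := by
      rw [Kernel.disintegrate, hκ]
    rw [e1, Kernel.compProd_apply hs, hfst, Measure.map_apply hme hs,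
      Measure.prod_apply (hme hs)]
    refine lintegral_congr fun u => ?_
    have hs' : MeasurableSet (Prod.mk u ⁻¹' s) := measurable_prodMk_left hs
    rw [← hqm, Measure.map_apply hq.of_uncurry_left hs', ← unif01_map_proj,
      Measure.map_apply continuous_projIcc.measurable (hq.of_uncurry_left hs')]
    rfl
  refine ⟨Q, hQ, ?_, ?_, ?_⟩
  · intro σ y p
    have : Quotient.mk (permSetoid i) (fun a => y (a.map σ.toEmbedding))
        = Quotient.mk (permSetoid i) y :=
      (Quotient.sound (s := permSetoid i) ⟨σ, rfl⟩).symm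
    simp only [Q, this]
  · intro y
    have h1 := congrArg (Measure.map Prod.snd) (key y)
    simp only [m] at h1
    rw [Measure.map_map measurable_snd (measurable_fst.prodMk (hQy y)),
      Measure.map_map measurable_snd (hFx y)] at h1
    have h2 : unif01.map (Prod.snd ∘ fun w => (G (Function.update y Finset.univ w), w)) = unif01 :=
      Measure.map_id
    rw [h2] at h1
    exact h1
  · intro y
    have hS : MeasurableSet {p : ℝ × ℝ | G (Function.update y Finset.univ p.2) = p.1} :=
      measurableSet_eq_fun (measurable_fst.comp ((hFx y).comp measurable_snd)) measurable_fst
    have h1 : ∀ᵐ p ∂(m y), G (Function.update y Finset.univ p.2) = p.1 := by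
      refine (ae_map_iff (hFx y).aemeasurable hS).2 ?_
      exact Filter.Eventually.of_forall fun w => rfl
    rw [← key y] at h1
    exact (ae_map_iff (measurable_fst.prodMk (hQy y)).aemeasurable hS).1 h1

/-- Independence of the chosen enumeration, for a middle-symmetric function. -/
lemma hatC_eq {C D : Type*} {k n : ℕ} (f : ∀ i : ℕ, (Finset (Fin i) → C) → D)
    (hf : ∀ (σ : Equiv.Perm (Fin n)) (x : Finset (Fin n) → C),
      f n (fun a => x (a.map σ.toEmbedding)) = f n x)
    (z : Finset (Fin k) → C) (e : Finset (Fin k)) (φ : Fin n ↪ Fin k)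
    (hφ : Finset.univ.map φ = e) :
    hatC f z e = f n (fun a => z (a.map φ)) := by
  have hn : e.card = n := by simp [← hφ]
  subst hn
  have hmem : ∀ j, ∃ l, e.orderEmbOfFin rfl l = φ j := by
    intro j
    have : φ j ∈ Set.range (e.orderEmbOfFin rfl) := by
      rw [Finset.range_orderEmbOfFin]
      have h1 : φ j ∈ Finset.univ.map φ := Finset.mem_map_of_mem _ (Finset.mem_univ j)
      have h2 : ∀ t : Finset (Fin k), Finset.univ.map φ = t → φ j ∈ t := fun t ht => ht ▸ h1
      exact Finset.mem_coe.2 (h2 e hφ)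
    exact this
  choose s hs using hmem
  have hinj : Function.Injective s := by
    intro a b hab
    apply φ.injective
    rw [← hs, ← hs, hab]
  let σ : Equiv.Perm (Fin e.card) := Equiv.ofBijective s (Finite.injective_iff_bijective.1 hinj)
  have hcomp : ∀ a : Finset (Fin e.card),
      a.map φ = (a.map σ.toEmbedding).map (e.orderEmbOfFin rfl).toEmbedding := by
    intro a
    rw [Finset.map_map]
    congr 1
    ext j
    simp [σ, hs]
  simp only [hcomp]
  exact (hf σ (fun a => z (a.map (e.orderEmbOfFin rfl).toEmbedding))).symm

/-- The recursively defined tuple. -/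
noncomputable def recTuple (Q : ∀ i : ℕ, (Finset (Fin i) → ℝ) → ℝ × ℝ → ℝ) :
    ∀ i : ℕ, (Finset (Fin i) → ℝ × ℝ) → ℝ
  | i, z => Q i (fun a => if _h : a = Finset.univ then 0 else
      recTuple Q a.card (fun b => z (b.map (a.orderEmbOfFin rfl).toEmbedding))) (z Finset.univ)
termination_by i => i
decreasing_by
  have := Finset.card_lt_univ_of_notMem
    (Classical.choose_spec (not_forall.1 (mt Finset.eq_univ_iff_forall.2 _h)))
  simpa using this

/-- The lower coordinates. -/
noncomputable def lowTuple (Q : ∀ i : ℕ, (Finset (Fin i) → ℝ) → ℝ × ℝ → ℝ) (i : ℕ)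
    (z : Finset (Fin i) → ℝ × ℝ) (a : Finset (Fin i)) : ℝ :=
  if a = Finset.univ then 0 else hatC (recTuple Q) z a

lemma recTuple_eq (Q : ∀ i : ℕ, (Finset (Fin i) → ℝ) → ℝ × ℝ → ℝ) (i : ℕ)
    (z : Finset (Fin i) → ℝ × ℝ) :
    recTuple Q i z = Q i (lowTuple Q i z) (z Finset.univ) := by
  rw [recTuple]
  rfl

lemma card_lt_of_ne_univ {i : ℕ} {a : Finset (Fin i)} (h : a ≠ Finset.univ) : a.card < i := by
  have := Finset.card_lt_card (Finset.ssubset_univ_iff.2 h)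
  simpa using this

lemma recTuple_measurable (Q : ∀ i : ℕ, (Finset (Fin i) → ℝ) → ℝ × ℝ → ℝ)
    (hQ : ∀ i, Measurable (Function.uncurry (Q i))) (i : ℕ) : Measurable (recTuple Q i) := by
  induction i using Nat.strong_induction_on with
  | _ i ih =>
    have : recTuple Q i = fun z => Function.uncurry (Q i) (lowTuple Q i z, z Finset.univ) := by
      funext z
      exact recTuple_eq Q i z
    rw [this]
    refine (hQ i).comp (Measurable.prodMk (measurable_pi_lambda _ fun a => ?_)
      (measurable_pi_apply _))
    unfold lowTuple
    by_cases ha : a = Finset.univ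
    · simp [ha]
    · simp only [ha, if_false]
      exact (ih _ (card_lt_of_ne_univ ha)).comp
        (measurable_pi_lambda _ fun b => measurable_pi_apply _)

lemma recTuple_sym (Q : ∀ i : ℕ, (Finset (Fin i) → ℝ) → ℝ × ℝ → ℝ)
    (hQ : ∀ i (σ : Equiv.Perm (Fin i)) (y : Finset (Fin i) → ℝ) (p : ℝ × ℝ),
        Q i (fun a => y (a.map σ.toEmbedding)) p = Q i y p) : MidSymC (recTuple Q) := by
  intro i
  induction i using Nat.strong_induction_on with
  | _ i ih =>
    intro σ z
    have hlow : lowTuple Q i (fun a => z (a.map σ.toEmbedding))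
        = fun a => lowTuple Q i z (a.map σ.toEmbedding) := by
      funext a
      have hu : a.map σ.toEmbedding = Finset.univ ↔ a = Finset.univ := by
        rw [← Finset.map_univ_equiv σ, Finset.map_inj, Finset.map_univ_equiv σ]
      unfold lowTuple
      by_cases ha : a = Finset.univ
      · simp [ha]
      · simp only [hu, ha, if_false]
        rw [hatC_eq (recTuple Q) (ih _ (card_lt_of_ne_univ ha)) z (a.map σ.toEmbedding)
          ((a.orderEmbOfFin rfl).toEmbedding.trans σ.toEmbedding)
          (by rw [← Finset.map_map, Finset.map_orderEmbOfFin_univ])]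
        simp only [hatC, Finset.map_map]
    rw [recTuple_eq, recTuple_eq, hlow, hQ, Finset.map_univ_equiv]

lemma lowTuple_update (Q : ∀ i : ℕ, (Finset (Fin i) → ℝ) → ℝ × ℝ → ℝ) (i : ℕ)
    (z : Finset (Fin i) → ℝ × ℝ) (p : ℝ × ℝ) :
    lowTuple Q i (Function.update z Finset.univ p) = lowTuple Q i z := by
  funext a
  unfold lowTuple
  by_cases ha : a = Finset.univ
  · simp [ha]
  · simp only [ha, if_false, hatC]
    congr 1
    funext b
    rw [Function.update_of_ne]
    intro h
    have h1 := Finset.card_le_univ b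
    have h2 := congrArg Finset.card h
    have h3 := card_lt_of_ne_univ ha
    simp at h1 h2
    omega

lemma ae_pi_of_update {ι X : Type*} [Fintype ι] [DecidableEq ι] [MeasurableSpace X]
    (μ : Measure X) [SigmaFinite μ] (e : ι) (S : Set (ι → X)) (hS : MeasurableSet S)
    (h : ∀ x, ∀ᵐ u ∂μ, Function.update x e u ∈ S) :
    ∀ᵐ x ∂(Measure.pi fun _ : ι => μ), x ∈ S := by
  have h1 : ∫⁻ x, Sᶜ.indicator (fun _ => (1 : ENNReal)) x ∂(Measure.pi fun _ : ι => μ)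
      = ∫⁻ x, (fun _ => (0 : ENNReal)) x ∂(Measure.pi fun _ : ι => μ) := by
    refine lintegral_eq_of_lmarginal_eq {e} (measurable_const.indicator hS.compl)
      measurable_const ?_
    rw [lmarginal_singleton, lmarginal_singleton]
    funext x
    refine lintegral_congr_ae ?_
    filter_upwards [h x] with u hu
    simp [hu]
  rw [lintegral_indicator_const hS.compl] at h1
  rw [ae_iff]
  change (Measure.pi fun _ : ι => μ) Sᶜ = 0
  simpa using h1

/-- Factorization of measure-preserving skew-product maps: let `U = (U_e)_{e⊆[k]}` and
`V = (V_e)_{e⊆[k]}` be independent uniform variables in `[0,1)^{P[k]}`, modelled by the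
coordinates of the product measure below.  If `G : [0,1)^{P[k]} → [0,1)^{P[k]}` is of
skew-product type with Lebesgue-measure-preserving tuple, then there is
`H : ([0,1)×[0,1))^{P[k]} → [0,1)^{P[k]}` of skew-product type, with
Lebesgue-measure-preserving tuple, such that `G(H(U,V)) = U` almost surely. -/
theorem factorization_skew_product (k : ℕ)
    (g : ∀ i : ℕ, (Finset (Fin i) → ℝ) → ℝ)
    (hg_meas : ∀ i, Measurable (g i))
    (hg_sym : MidSymC g)
    (hg_mp : IsMPTuple unif01 unif01 g) :
    ∃ h : ∀ i : ℕ, (Finset (Fin i) → ℝ × ℝ) → ℝ,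
      (∀ i, Measurable (h i)) ∧ MidSymC h ∧
      IsMPTuple (unif01.prod unif01) unif01 h ∧
      ∀ᵐ x ∂(Measure.pi (fun _ : Finset (Fin k) => unif01.prod unif01)),
        hatC g (hatC h x) = fun e => (x e).1 := by
  choose Q hQ hQs hQm hQa using fun i => exists_step (g i) (hg_meas i) (hg_sym i) (hg_mp i)
  have hmeas := recTuple_measurable Q hQ
  have hsym := recTuple_sym Q hQs
  refine ⟨recTuple Q, hmeas, hsym, ?_, ?_⟩
  · intro i x
    simp only [recTuple_eq, lowTuple_update, Function.update_self]
    exact hQm i _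
  · have hhat : ∀ (f : ∀ i : ℕ, (Finset (Fin i) → ℝ × ℝ) → ℝ), (∀ i, Measurable (f i)) →
        ∀ e : Finset (Fin k), Measurable (fun x => hatC f x e) := fun f hf e =>
      (hf _).comp (measurable_pi_lambda _ fun b => measurable_pi_apply _)
    have hall : ∀ e : Finset (Fin k),
        ∀ᵐ x ∂(Measure.pi (fun _ : Finset (Fin k) => unif01.prod unif01)),
          hatC g (hatC (recTuple Q) x) e = (x e).1 := by
      intro e
      refine ae_pi_of_update (unif01.prod unif01) e
        {x | hatC g (hatC (recTuple Q) x) e = (x e).1} ?_ ?_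
      · refine measurableSet_eq_fun ?_ (measurable_fst.comp (measurable_pi_apply e))
        exact (hg_meas _).comp (measurable_pi_lambda _ fun b => hhat _ hmeas _)
      · intro x
        have hcoord : ∀ x : Finset (Fin k) → ℝ × ℝ, hatC g (hatC (recTuple Q) x) e
            = g e.card (Function.update
                (lowTuple Q e.card
                  (fun a => x (a.map (e.orderEmbOfFin rfl).toEmbedding)))
                Finset.univ
                (Q e.card (lowTuple Q e.card
                  (fun a => x (a.map (e.orderEmbOfFin rfl).toEmbedding))) (x e))) := by
          intro x
          conv_lhs => unfold hatC
          change g e.card (fun a => hatC (recTuple Q) x _) = _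
          congr 1
          funext a
          by_cases ha : a = Finset.univ
          · subst ha
            rw [Function.update_self,
              hatC_eq (recTuple Q) (hsym _) x _ (e.orderEmbOfFin rfl).toEmbedding rfl,
              recTuple_eq, Finset.map_orderEmbOfFin_univ]
          · rw [Function.update_of_ne ha]
            rw [hatC_eq (recTuple Q) (hsym _) x _ ((a.orderEmbOfFin rfl).toEmbedding.trans
                (e.orderEmbOfFin rfl).toEmbedding)
              (by rw [← Finset.map_map, Finset.map_orderEmbOfFin_univ])]
            simp only [lowTuple, ha, if_false, hatC, Finset.map_map]
        have hup : ∀ u, lowTuple Q e.card (fun a =>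
              Function.update x e u (a.map (e.orderEmbOfFin rfl).toEmbedding))
            = lowTuple Q e.card (fun a => x (a.map (e.orderEmbOfFin rfl).toEmbedding)) := by
          intro u
          rw [← lowTuple_update Q e.card
            (fun a => x (a.map (e.orderEmbOfFin rfl).toEmbedding)) u]
          congr 1
          funext a
          have : a.map (e.orderEmbOfFin rfl).toEmbedding = e ↔ a = Finset.univ := by
            conv_lhs => rhs; rw [← Finset.map_orderEmbOfFin_univ e rfl]
            exact Finset.map_inj
          simp only [Function.update_apply, this]
        filter_upwards [hQa e.card (lowTuple Q e.card
          (fun a => x (a.map (e.orderEmbOfFin rfl).toEmbedding)))] with u hu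
        rw [hcoord, hup, Function.update_self]
        exact hu
    filter_upwards [ae_all_iff.2 hall] with x hx
    funext e
    exact hx e
end
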